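/- arXiv:1911.08385 — 6 statements merged into one kernel-verified Lean document; each statement's English description precedes it below -/
import Mathlib

section
/- Let γ^1,…,γ^d be a Clifford family of N×N complex matrices and for m ≥ 0 define I_m := 2^{−m} · Σ (γ^{a_1} γ^{a_2} ⋯ γ^{a_m}) ⊗ (γ^{a_1} γ^{a_2} ⋯ γ^{a_m}), the sum running over all injective tuples (a_1,…,a_m) of indices in {1,…,d} (so I_0 = 1⊗1 and I_1 = 2z). Then for every m ≥ 1 the recurrence I_{m+1} = z·I_m − (m/4)·(d − m + 1)·I_{m−1} holds. -/
open Kronecker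

/-- `cliffInv γ m` is the invariant
`I_m = 2^{-m} · Σ_{(a_1,…,a_m) injective} (γ^{a_1}⋯γ^{a_m}) ⊗ (γ^{a_1}⋯γ^{a_m})`,
the sum running over all injective tuples of indices. -/
noncomputable def cliffInv {d N : ℕ} (γ : Fin d → Matrix (Fin N) (Fin N) ℂ) (m : ℕ) :
    Matrix (Fin N × Fin N) (Fin N × Fin N) ℂ :=
  ((2 : ℂ) ^ m)⁻¹ •
    ∑ f ∈ Finset.univ.filter (fun f : Fin m → Fin d => Function.Injective f),
      ((List.ofFn fun i => γ (f i)).prod ⊗ₖ (List.ofFn fun i => γ (f i)).prod)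

/-!
The elements `w a = γ a ⊗ₖ γ a` commute, because the two signs from anticommutation cancel, and
they square to `1`. When `∑ a, w a` multiplies a product `w (f 0) * ⋯ * w (f (m - 1))` over an
injective tuple, an index `a` outside the range of `f` extends the tuple, while `a = f i` cancels
the factor `w (f i)` and leaves an injective tuple of length `m - 1`. Each of the latter arises,
for each position `i`, from the `d - (m - 1)` choices of the cancelled index.
-/

section Embedding

variable {ι M : Type*} [Fintype ι] [AddCommMonoid M]

lemma sum_filter_injective_eq_sum_embedding {α β : Type*} [Fintype α] [DecidableEq α] [Fintype β]
    [DecidableEq β] (F : (α → β) → M) :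
    ∑ f with Function.Injective f, F f = ∑ f : α ↪ β, F f := by
  rw [← (Equiv.subtypeInjectiveEquivEmbedding α β).sum_comp]
  exact Finset.sum_subtype _ (by simp) F

lemma sum_embedding_fin_succ [DecidableEq ι] {m : ℕ} (F : (Fin (m + 1) → ι) → M) :
    ∑ f : Fin (m + 1) ↪ ι, F f =
      ∑ g : Fin m ↪ ι, ∑ a : {a // a ∉ Set.range g}, F (Fin.cons a.1 g) := by
  rw [← (Equiv.embeddingFinSucc m ι).symm.sum_comp, Fintype.sum_sigma]
  simp only [Equiv.coe_embeddingFinSucc_symm]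

lemma sum_eq_sum_notMem_range_add_sum_apply [DecidableEq ι] {κ : Type*} [Fintype κ]
    (g : κ ↪ ι) (F : ι → M) :
    ∑ a, F a = ∑ a : {a // a ∉ Set.range g}, F a + ∑ i, F (g i) := by
  rw [← Fintype.sum_subtype_add_sum_subtype (· ∈ Set.range g) F, add_comm]
  congr 1
  exact (Finset.sum_equiv (Equiv.ofInjective g g.injective) (by simp) fun _ _ => rfl).symm

end Embedding

lemma card_notMem_range_embedding {ι κ : Type*} [Fintype ι] [Fintype κ] [DecidableEq ι]
    (g : κ ↪ ι) :
    (Fintype.card {a // a ∉ Set.range g} : ℤ) = Fintype.card ι - Fintype.card κ := by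
  rw [Fintype.card_subtype_compl, Nat.cast_sub (Fintype.card_subtype_le _),
    ← Set.card_range_of_injective g.injective]

lemma prod_ofFn_comp_perm_of_commute {M : Type*} [Monoid M] {m : ℕ} (w : Fin m → M)
    (hw : ∀ i j, Commute (w i) (w j)) (σ : Equiv.Perm (Fin m)) :
    (List.ofFn (w ∘ σ)).prod = (List.ofFn w).prod :=
  (σ.ofFn_comp_perm w).prod_eq' (List.pairwise_ofFn.2 fun _ _ _ => hw _ _)

/-- The sum of the ordered products `w (f 0) * ⋯ * w (f (m - 1))` over the injective `m`-tuples
`f` of indices. For commuting `w a` this is `m!` times their `m`-th elementary symmetric function.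
Injective tuples are encoded as embeddings of `Fin m`. -/
noncomputable def injProdSum {ι R : Type*} [Fintype ι] [Semiring R] (w : ι → R) (m : ℕ) : R :=
  ∑ f : Fin m ↪ ι, (List.ofFn (w ∘ f)).prod

section InjProdSum

variable {ι R : Type*} [Fintype ι]

lemma sum_mul_injProdSum [Semiring R] (w : ι → R) (m : ℕ) :
    (∑ a, w a) * injProdSum w m =
      injProdSum w (m + 1) + ∑ i, ∑ f : Fin m ↪ ι, w (f i) * (List.ofFn (w ∘ f)).prod := by
  classical
  rw [injProdSum, injProdSum, sum_embedding_fin_succ fun f => (List.ofFn (w ∘ f)).prod,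
    Finset.sum_comm, ← Finset.sum_add_distrib, Finset.mul_sum]
  refine Finset.sum_congr rfl fun f _ => ?_
  rw [Finset.sum_mul, sum_eq_sum_notMem_range_add_sum_apply f]
  simp [List.ofFn_succ, Function.comp_def]

lemma sum_apply_mul_prod_ofFn_eq_of_commute [Semiring R] {w : ι → R}
    (hcomm : ∀ a b, Commute (w a) (w b)) {m : ℕ} (i j : Fin m) :
    ∑ f : Fin m ↪ ι, w (f i) * (List.ofFn (w ∘ f)).prod =
      ∑ f : Fin m ↪ ι, w (f j) * (List.ofFn (w ∘ f)).prod := by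
  rw [← (Equiv.embeddingCongr (Equiv.swap i j) (Equiv.refl ι)).sum_comp]
  refine Finset.sum_congr rfl fun f _ => ?_
  have hprod := prod_ofFn_comp_perm_of_commute (w ∘ f) (fun _ _ => hcomm _ _) (Equiv.swap i j)
  simpa [Function.comp_def] using congrArg (w (f j) * ·) hprod

variable [Ring R] {w : ι → R}

lemma sum_apply_zero_mul_prod_ofFn (hsq : ∀ a, w a * w a = 1) (k : ℕ) :
    ∑ f : Fin (k + 1) ↪ ι, w (f 0) * (List.ofFn (w ∘ f)).prod =
      ((Fintype.card ι : ℤ) - k) • injProdSum w k := by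
  classical
  rw [sum_embedding_fin_succ fun f => w (f 0) * (List.ofFn (w ∘ f)).prod, injProdSum,
    Finset.smul_sum]
  refine Finset.sum_congr rfl fun f _ => ?_
  have hcancel (a : ι) :
      w a * (List.ofFn (w ∘ (Fin.cons a f : Fin (k + 1) → ι))).prod = (List.ofFn (w ∘ f)).prod := by
    simp [List.ofFn_succ, ← mul_assoc, hsq, Function.comp_def]
  have hcard := card_notMem_range_embedding f
  rw [Fintype.card_fin] at hcard
  simp only [Fin.cons_zero, hcancel, Finset.sum_const, Finset.card_univ, ← hcard, natCast_zsmul]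

theorem sum_mul_injProdSum_succ (hcomm : ∀ a b, Commute (w a) (w b))
    (hsq : ∀ a, w a * w a = 1) (k : ℕ) :
    (∑ a, w a) * injProdSum w (k + 1) =
      injProdSum w (k + 2) + (((k : ℤ) + 1) * (Fintype.card ι - k)) • injProdSum w k := by
  rw [sum_mul_injProdSum]
  simp only [sum_apply_mul_prod_ofFn_eq_of_commute hcomm _ 0, sum_apply_zero_mul_prod_ofFn hsq,
    Finset.sum_const, Finset.card_univ, Fintype.card_fin, mul_smul]
  rw [← natCast_zsmul, Nat.cast_succ]

theorem cliffInv_recurrence_general {K : Type*} [Field K] [NeZero (2 : K)] [Algebra K R]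
    (hcomm : ∀ a b, Commute (w a) (w b)) (hsq : ∀ a, w a * w a = 1) {m : ℕ} (hm : 1 ≤ m) :
    ((2 : K) ^ (m + 1))⁻¹ • injProdSum w (m + 1) =
      ((1 / 2 : K) • ∑ a, w a) * (((2 : K) ^ m)⁻¹ • injProdSum w m) -
        ((m : K) / 4 * (Fintype.card ι - m + 1)) •
          (((2 : K) ^ (m - 1))⁻¹ • injProdSum w (m - 1)) := by
  obtain ⟨k, rfl⟩ := Nat.exists_eq_add_of_le' hm
  have hrec := eq_sub_of_add_eq (sum_mul_injProdSum_succ hcomm hsq k).symm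
  have h2 : (2 : K) ≠ 0 := two_ne_zero
  have h4 : (4 : K) = 2 * 2 := by norm_num
  rw [hrec, smul_mul_smul_comm, ← Int.cast_smul_eq_zsmul K, smul_sub, smul_smul, smul_smul,
    Nat.add_sub_cancel, h4]
  congr 2
  · field_simp
    ring
  · push_cast
    field_simp
    ring

end InjProdSum

section KroneckerSquare

lemma neg_kronecker_neg {l m n p R : Type*} [Mul R] [HasDistribNeg R] (A : Matrix l m R)
    (B : Matrix n p R) : (-A) ⊗ₖ (-B) = A ⊗ₖ B := by
  ext
  simp

variable {n R : Type*} [Fintype n]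

/-- The Kronecker square `A ↦ A ⊗ₖ A`, bundled as a monoid homomorphism so that it commutes with
products of lists. -/
def kroneckerSquare [DecidableEq n] [CommSemiring R] :
    Matrix n n R →* Matrix (n × n) (n × n) R where
  toFun A := A ⊗ₖ A
  map_one' := Matrix.one_kronecker_one
  map_mul' A B := Matrix.mul_kronecker_mul A B A B

lemma commute_kronecker_self_of_anticommute [CommRing R] {A B : Matrix n n R}
    (h : A * B + B * A = 0) : Commute (A ⊗ₖ A) (B ⊗ₖ B) := by
  rw [Commute, SemiconjBy, ← Matrix.mul_kronecker_mul, ← Matrix.mul_kronecker_mul,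
    eq_neg_of_add_eq_zero_left h, neg_kronecker_neg]

end KroneckerSquare

lemma cliffInv_eq_smul_injProdSum {d N : ℕ} (γ : Fin d → Matrix (Fin N) (Fin N) ℂ) (m : ℕ) :
    cliffInv γ m = ((2 : ℂ) ^ m)⁻¹ • injProdSum (fun a => γ a ⊗ₖ γ a) m := by
  have hprod (f : Fin m → Fin d) :
      (List.ofFn fun i => γ (f i)).prod ⊗ₖ (List.ofFn fun i => γ (f i)).prod =
        (List.ofFn fun i => γ (f i) ⊗ₖ γ (f i)).prod := by
    have hmap := map_list_prod kroneckerSquare (List.ofFn fun i => γ (f i))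
    rwa [List.map_ofFn] at hmap
  simp only [cliffInv, injProdSum, hprod, sum_filter_injective_eq_sum_embedding,
    Function.comp_def]

/-- Recurrence `I_{m+1} = z·I_m − (m/4)(d − m + 1)·I_{m−1}` for the invariants of a
Clifford family, where `z = (1/2)·Σ_a γ^a ⊗ γ^a`. -/
theorem cliffInv_recurrence {d N : ℕ} (γ : Fin d → Matrix (Fin N) (Fin N) ℂ)
    (hγ : ∀ a b, γ a * γ b + γ b * γ a =
      if a = b then (2 : ℂ) • (1 : Matrix (Fin N) (Fin N) ℂ) else 0)
    (z : Matrix (Fin N × Fin N) (Fin N × Fin N) ℂ)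
    (hz : z = (1/2 : ℂ) • ∑ a, γ a ⊗ₖ γ a)
    (m : ℕ) (hm : 1 ≤ m) :
    cliffInv γ (m + 1) =
      z * cliffInv γ m - (((m : ℂ) / 4) * ((d : ℂ) - (m : ℂ) + 1)) • cliffInv γ (m - 1) := by
  have hcomm (a b) : Commute (γ a ⊗ₖ γ a) (γ b ⊗ₖ γ b) := by
    obtain rfl | hab := eq_or_ne a b
    · exact Commute.refl _
    · exact commute_kronecker_self_of_anticommute (by simpa [hab] using hγ a b)
  have hsq (a) : γ a ⊗ₖ γ a * γ a ⊗ₖ γ a = 1 := by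
    have hγsq : γ a * γ a = 1 :=
      smul_right_injective _ (two_ne_zero (α := ℂ)) (by simpa [two_smul] using hγ a a)
    rw [← Matrix.mul_kronecker_mul, hγsq, Matrix.one_kronecker_one]
  simpa only [cliffInv_eq_smul_injProdSum, hz, Fintype.card_fin] using
    cliffInv_recurrence_general (K := ℂ) hcomm hsq hm
end

section
/- Let m ≥ 1 and let γ^1,…,γ^{2m} be a Clifford family of N×N complex matrices in dimension d = 2m. Then the matrix z = (1/2)·Σ_{a=1}^{2m} γ^a ⊗ γ^a satisfies the characteristic polynomial identity ∏_{k=−m}^{m} (z − k·1) = 0; that is, z·(z²−1)·(z²−4)⋯(z²−m²) = 0. In particular, for so(4) one has z(z²−1)(z²−4) = 0, and for so(6) one has z(z²−1)(z²−4)(z²−9) = 0. -/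
open Kronecker

/-! For anticommuting `γ a`, `γ b`, the two signs in `γ a ⊗ₖ γ a` and `γ b ⊗ₖ γ b` cancel, so the
matrices `γ a ⊗ₖ γ a` are commuting involutions. Hence the `(1 + γ a ⊗ₖ γ a) / 2` are `d` commuting
idempotents, and `z + d / 2` is their sum. A sum of `d` commuting idempotents is annihilated by the
falling factorial `X (X - 1) ⋯ (X - d)`: an idempotent is annihilated by `X (X - 1)`, and by the
Chu–Vandermonde identity the lengths of annihilating falling factorials, less one, add up when
commuting elements are added. -/

section FallingFactorial

open Polynomial

theorem descPochhammer_dvd_descPochhammer (R : Type*) [Ring R] {m n : ℕ} (h : m ≤ n) :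
    descPochhammer R m ∣ descPochhammer R n := by
  obtain ⟨k, rfl⟩ := Nat.exists_eq_add_of_le h
  exact Dvd.intro _ (descPochhammer_mul R m k)

variable {A : Type*} [Ring A]

theorem aeval_descPochhammer_eq_list_prod (x : A) (n : ℕ) :
    aeval x (descPochhammer ℤ n) = ((List.range n).map fun k : ℕ => x - k).prod := by
  induction n with
  | zero => simp
  | succ n ih => simp [descPochhammer_succ_right, List.range_succ, ih]

theorem aeval_descPochhammer_eq_zero_of_le {x : A} {m n : ℕ} (h : m ≤ n)
    (hx : aeval x (descPochhammer ℤ m) = 0) : aeval x (descPochhammer ℤ n) = 0 :=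
  aeval_eq_zero_of_dvd_aeval_eq_zero (descPochhammer_dvd_descPochhammer ℤ h) hx

theorem aeval_add_descPochhammer_eq_zero {x y : A} {m n : ℕ} (hxy : Commute x y)
    (hx : aeval x (descPochhammer ℤ (m + 1)) = 0) (hy : aeval y (descPochhammer ℤ (n + 1)) = 0) :
    aeval (x + y) (descPochhammer ℤ (m + n + 1)) = 0 := by
  rw [aeval_eq_smeval, Ring.descPochhammer_smeval_add _ hxy]
  refine Finset.sum_eq_zero fun ij hij => ?_
  rw [Finset.HasAntidiagonal.mem_antidiagonal] at hij
  simp only [← aeval_eq_smeval]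
  obtain hi | hj : m + 1 ≤ ij.1 ∨ n + 1 ≤ ij.2 := by omega
  · rw [aeval_descPochhammer_eq_zero_of_le hi hx, zero_mul, mul_zero]
  · rw [aeval_descPochhammer_eq_zero_of_le hj hy, mul_zero, mul_zero]

theorem aeval_descPochhammer_two_of_isIdempotentElem {e : A} (he : IsIdempotentElem e) :
    aeval e (descPochhammer ℤ 2) = 0 := by
  simp [descPochhammer_succ_right, mul_sub, he.eq]

theorem aeval_sum_idempotents_descPochhammer {ι : Type*} {e : ι → A} (s : Finset ι)
    (he : ∀ i ∈ s, IsIdempotentElem (e i))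
    (hcomm : (s : Set ι).Pairwise fun i j => Commute (e i) (e j)) :
    aeval (∑ i ∈ s, e i) (descPochhammer ℤ (s.card + 1)) = 0 := by
  induction s using Finset.cons_induction with
  | empty => simp
  | cons i s hi ih =>
    rw [Finset.coe_cons] at hcomm
    have hsum : Commute (∑ j ∈ s, e j) (e i) := Commute.sum_left _ _ _ fun j hj =>
      hcomm (Set.mem_insert_of_mem _ hj) (Set.mem_insert _ _) (ne_of_mem_of_not_mem hj hi)
    rw [Finset.sum_cons, Finset.card_cons, add_comm (e i)]
    exact aeval_add_descPochhammer_eq_zero hsum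
      (ih (fun j hj => he j (Finset.mem_cons_of_mem hj)) (hcomm.mono (Set.subset_insert _ _)))
      (aeval_descPochhammer_two_of_isIdempotentElem (he i (Finset.mem_cons_self i s)))

end FallingFactorial

section Involutions

variable {R A : Type*} [CommRing R] [Invertible (2 : R)] [Ring A] [Algebra R A]

variable (R) in
theorem isIdempotentElem_invOf_two_smul_one_add {g : A} (hg : g * g = 1) :
    IsIdempotentElem ((⅟2 : R) • (1 + g)) := by
  have hsq : (1 + g) * (1 + g) = (2 : R) • (1 + g) := by
    rw [two_smul, mul_add, mul_one, add_mul, hg, one_mul, add_comm g 1]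
  rw [IsIdempotentElem, smul_mul_smul_comm, hsq, smul_smul, mul_assoc, invOf_mul_self, mul_one]

theorem list_prod_half_sum_involutions_sub_eq_zero {ι : Type*} [Fintype ι] {g : ι → A}
    (hsq : ∀ a, g a * g a = 1) (hcomm : Pairwise fun a b => Commute (g a) (g b)) :
    ((List.range (Fintype.card ι + 1)).map fun k : ℕ =>
      (⅟2 : R) • ∑ a, g a - ((k : R) - ⅟2 * Fintype.card ι) • (1 : A)).prod = 0 := by
  let e (a : ι) : A := (⅟2 : R) • (1 + g a)
  have he_comm : Pairwise fun a b => Commute (e a) (e b) := fun a b hab =>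
    (((Commute.one_left _).add_left
      ((Commute.one_right _).add_right (hcomm hab))).smul_left _).smul_right _
  have shift (k : ℕ) :
      (⅟2 : R) • ∑ a, g a - ((k : R) - ⅟2 * Fintype.card ι) • (1 : A) = ∑ a, e a - k := by
    simp only [e, ← Finset.smul_sum, Finset.sum_add_distrib, Finset.sum_const, Finset.card_univ,
      smul_add, sub_smul, mul_smul, Nat.cast_smul_eq_nsmul, nsmul_one]
    abel
  simp only [shift, ← aeval_descPochhammer_eq_list_prod]
  exact aeval_sum_idempotents_descPochhammer Finset.univ
    (fun a _ => isIdempotentElem_invOf_two_smul_one_add R (hsq a)) (he_comm.set_pairwise _)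

end Involutions

/-- A Clifford family: square roots of one that anticommute pairwise. This form of the relations
`γ a * γ b + γ b * γ a = 2 δ_{ab}` does not require dividing by two. -/
structure IsCliffordFamily {ι A : Type*} [Ring A] (γ : ι → A) : Prop where
  mul_self : ∀ a, γ a * γ a = 1
  anticommute : Pairwise fun a b => γ a * γ b = -(γ b * γ a)

theorem IsCliffordFamily.of_anticommutator_eq {R A ι : Type*} [Semiring R] [Invertible (2 : R)]
    [Ring A] [Module R A] [DecidableEq ι] {γ : ι → A}
    (h : ∀ a b, γ a * γ b + γ b * γ a = if a = b then (2 : R) • (1 : A) else 0) :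
    IsCliffordFamily γ where
  mul_self a := by
    have hdouble : (2 : R) • (γ a * γ a) = (2 : R) • (1 : A) := by
      rw [two_smul, h, if_pos rfl]
    rw [← invOf_smul_smul (2 : R) (γ a * γ a), hdouble, invOf_smul_smul]
  anticommute a b hab := eq_neg_of_add_eq_zero_left ((h a b).trans (if_neg hab))

section Kronecker

variable {R n n' : Type*} [CommRing R] [Fintype n] [Fintype n']

theorem commute_kronecker_of_anticommute {A B : Matrix n n R} {C D : Matrix n' n' R}
    (hAB : A * B = -(B * A)) (hCD : C * D = -(D * C)) : Commute (A ⊗ₖ C) (B ⊗ₖ D) := by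
  rw [Commute, SemiconjBy, ← Matrix.mul_kronecker_mul, ← Matrix.mul_kronecker_mul, hAB, hCD]
  ext
  simp only [Matrix.kroneckerMap_apply, Matrix.neg_apply, neg_mul_neg]

theorem clifford_z_char_poly_even_general {ι : Type*} [Fintype ι] [DecidableEq n]
    [DecidableEq n'] [Invertible (2 : R)] {γ : ι → Matrix n n R} {γ' : ι → Matrix n' n' R}
    (hγ : IsCliffordFamily γ) (hγ' : IsCliffordFamily γ') :
    ((List.range (Fintype.card ι + 1)).map fun k : ℕ =>
      (⅟2 : R) • ∑ a, γ a ⊗ₖ γ' a - ((k : R) - ⅟2 * Fintype.card ι) •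
        (1 : Matrix (n × n') (n × n') R)).prod = 0 :=
  list_prod_half_sum_involutions_sub_eq_zero
    (fun a => by
      rw [← Matrix.mul_kronecker_mul, hγ.mul_self, hγ'.mul_self, Matrix.one_kronecker_one])
    fun _ _ hab => commute_kronecker_of_anticommute (hγ.anticommute hab) (hγ'.anticommute hab)

end Kronecker

/-- Characteristic polynomial identity for `z = (1/2)·Σ_{a=1}^{2m} γ^a ⊗ γ^a` built from a
Clifford family in even dimension `d = 2m`:
`∏_{k=-m}^{m} (z − k·1) = 0`, i.e. `z(z²−1)(z²−4)⋯(z²−m²) = 0`. -/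
theorem clifford_z_char_poly_even {m N : ℕ} (hm : 1 ≤ m)
    (γ : Fin (2 * m) → Matrix (Fin N) (Fin N) ℂ)
    (hγ : ∀ a b, γ a * γ b + γ b * γ a =
      if a = b then (2 : ℂ) • (1 : Matrix (Fin N) (Fin N) ℂ) else 0)
    (z : Matrix (Fin N × Fin N) (Fin N × Fin N) ℂ)
    (hz : z = (1/2 : ℂ) • ∑ a, γ a ⊗ₖ γ a) :
    ((List.range (2 * m + 1)).map
      (fun k => z - (((k : ℂ) - (m : ℂ)) • (1 : Matrix (Fin N × Fin N) (Fin N × Fin N) ℂ)))).prod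
      = 0 := by
  have hcliff : IsCliffordFamily γ := .of_anticommutator_eq hγ
  -- As `k : ℂ`, the range is cast to `List ℂ` in the list monad, hence the `flatMap`.
  simpa [hz, ← List.map_eq_flatMap, Function.comp_def] using
    clifford_z_char_poly_even_general hcliff hcliff
end

section
/- Let m ≥ 0 and let γ^1,…,γ^{2m+1} be a Clifford family of complex matrices of size N = 2^m in odd dimension d = 2m+1. Then the matrix z = (1/2)·Σ_{a=1}^{2m+1} γ^a ⊗ γ^a satisfies the reduced characteristic polynomial identity ∏_{k=0}^{m} (z − (−1)^k·(2k+1)/2 · 1) = 0. In particular, for so(3) (Pauli matrices) one has (z − 1/2)(z + 3/2) = 0, and for so(5) one has (z − 1/2)(z + 3/2)(z − 5/2) = 0. -/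
open Kronecker

/-!
The elements `e a = γ a ⊗ γ a` are commuting involutions, so a polynomial identity between them
holds as soon as it holds at all sign vectors (Combinatorial Nullstellensatz). Their product is
`ω ⊗ ω`, where `ω` is the product of all the generators. In odd dimension `2m + 1` the element `ω`
commutes with every generator, and `ω * ω = (-1) ^ m`. Conjugation by `2m` of the generators splits
the algebra into `4 ^ m` nonzero joint eigenspaces; as the algebra has dimension `4 ^ m`, these are
lines, so `ω` is a scalar and `ω ⊗ ω = 1 ⊗ ω * ω = (-1) ^ m`. Finally, `2m + 1` signs with product
`(-1) ^ m` have a sum congruent to `1` modulo `4`, and the integers congruent to `1` modulo `4` of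
absolute value at most `2m + 1` are `1, -3, 5, …, (-1) ^ m * (2m + 1)`.
-/

open Module TensorProduct

section Signs

theorem sum_intUnits_modEq_four {ι : Type*} (s : Finset ι) (ε : ι → ℤˣ) :
    ∑ i ∈ s, (ε i : ℤ) ≡ s.card - 1 + ((∏ i ∈ s, ε i : ℤˣ) : ℤ) [ZMOD 4] := by
  classical
  induction s using Finset.induction_on with
  | empty => simp [Int.ModEq]
  | insert i s hi ih =>
    rw [Finset.sum_insert hi, Finset.prod_insert hi, Finset.card_insert_of_notMem hi]
    simp only [Int.ModEq] at ih ⊢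
    rcases Int.units_eq_one_or (ε i) with h | h <;>
      rcases Int.units_eq_one_or (∏ j ∈ s, ε j) with h' | h' <;>
      simp only [h, h', Units.val_mul, Units.val_neg, Units.val_one] at ih ⊢ <;> push_cast <;> omega

theorem abs_sum_intUnits_le_card {ι : Type*} (s : Finset ι) (ε : ι → ℤˣ) :
    |∑ i ∈ s, (ε i : ℤ)| ≤ s.card := by
  calc |∑ i ∈ s, (ε i : ℤ)| ≤ ∑ i ∈ s, |(ε i : ℤ)| := Finset.abs_sum_le_sum_abs _ _
    _ = s.card := by simp [Int.isUnit_iff_abs_eq.1 (Units.isUnit _)]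

theorem exists_eq_neg_one_pow_mul_of_modEq_one {m : ℕ} {s : ℤ} (hs : s ≡ 1 [ZMOD 4])
    (hsm : |s| ≤ 2 * m + 1) : ∃ k ≤ m, s = (-1) ^ k * (2 * k + 1) := by
  obtain ⟨lower, upper⟩ := abs_le.1 hsm
  obtain ⟨j, rfl⟩ : ∃ j, s = 4 * j + 1 := ⟨(s - 1) / 4, by simp only [Int.ModEq] at hs; omega⟩
  rcases le_or_gt 0 j with hj | hj
  · lift j to ℕ using hj
    refine ⟨2 * j, by omega, ?_⟩
    rw [(even_two_mul j).neg_one_pow]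
    push_cast
    ring
  · obtain ⟨i, rfl⟩ : ∃ i : ℕ, j = -(i + 1) := ⟨(-j - 1).toNat, by omega⟩
    refine ⟨2 * i + 1, by omega, ?_⟩
    rw [(odd_two_mul_add_one i).neg_one_pow]
    push_cast
    ring

theorem exists_sum_intUnits_eq {ι : Type*} [Fintype ι] {m : ℕ}
    (hι : Fintype.card ι = 2 * m + 1) {ε : ι → ℤˣ} (hε : ∏ i, ε i = (-1) ^ m) :
    ∃ k ≤ m, ∑ i, (ε i : ℤ) = (-1) ^ k * (2 * k + 1) := by
  have sum_modEq_one : ∑ i, (ε i : ℤ) ≡ 1 [ZMOD 4] := by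
    have h := sum_intUnits_modEq_four Finset.univ ε
    rw [hε, Finset.card_univ, hι] at h
    refine h.trans ?_
    rcases Nat.even_or_odd' m with ⟨j, rfl | rfl⟩
    · rw [(even_two_mul j).neg_one_pow]
      simp only [Int.ModEq, Units.val_one]
      omega
    · rw [(odd_two_mul_add_one j).neg_one_pow]
      simp only [Int.ModEq, Units.val_neg, Units.val_one]
      omega
  have abs_sum_le : |∑ i, (ε i : ℤ)| ≤ 2 * m + 1 := by
    simpa [hι] using abs_sum_intUnits_le_card Finset.univ ε
  exact exists_eq_neg_one_pow_mul_of_modEq_one sum_modEq_one abs_sum_le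

theorem neg_one_pow_two_mul_add_one_choose_two {M : Type*} [Monoid M] [HasDistribNeg M] (m : ℕ) :
    (-1 : M) ^ (2 * m + 1).choose 2 = (-1) ^ m := by
  have choose_eq : (2 * m + 1).choose 2 = (2 * m + 1) * m := by
    rw [Nat.choose_two_right, Nat.add_sub_cancel, mul_left_comm,
      Nat.mul_div_cancel_left _ two_pos]
  rw [choose_eq, pow_mul, (odd_two_mul_add_one m).neg_one_pow]

end Signs

section CommutingInvolutions

open MvPolynomial

variable {ι R B : Type*} [CommRing R] [Ring B] [Algebra R B]

theorem algHom_eq_zero_of_eval_signs_eq_zero [Finite ι] [IsDomain R] (hR : ringChar R ≠ 2)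
    (φ : MvPolynomial ι R →ₐ[R] B) (hφ : ∀ i, φ (X i) * φ (X i) = 1) {f : MvPolynomial ι R}
    (hf : ∀ ε : ι → ℤˣ, eval (fun i ↦ ((ε i : ℤ) : R)) f = 0) : φ f = 0 := by
  classical
  have eval_eq_zero (x : ι → R) (hx : ∀ i, x i ∈ ({1, -1} : Finset R)) : eval x f = 0 := by
    have lift_sign (i : ι) : ∃ u : ℤˣ, ((u : ℤ) : R) = x i := by
      rcases Finset.mem_insert.1 (hx i) with h | h
      · exact ⟨1, by simp [h]⟩
      · exact ⟨-1, by simp [Finset.mem_singleton.1 h]⟩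
    choose ε hε using lift_sign
    simpa only [hε] using hf ε
  obtain ⟨h, -, rfl⟩ := combinatorial_nullstellensatz_exists_linearCombination
    (fun _ ↦ {1, -1}) (fun _ ↦ Finset.insert_nonempty _ _) f eval_eq_zero
  rw [Finsupp.linearCombination_apply, Finsupp.sum, map_sum]
  refine Finset.sum_eq_zero fun i _ ↦ ?_
  have relation : φ (∏ r ∈ {1, -1}, (X i - C r)) = 0 := by
    rw [Finset.prod_pair (Ring.neg_one_ne_one_of_char_ne_two hR).symm]
    simp [sub_mul, mul_add, hφ]
  rw [smul_eq_mul, map_mul, relation, mul_zero]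

open scoped IsMulCommutative in
theorem exists_algHom_mvPolynomial_of_commute {e : ι → B} (he : ∀ i j, Commute (e i) (e j)) :
    ∃ φ : MvPolynomial ι R →ₐ[R] B, ∀ i, φ (X i) = e i := by
  have := Algebra.isMulCommutative_adjoin R (s := Set.range e)
    (by rintro _ ⟨i, rfl⟩ _ ⟨j, rfl⟩; exact he i j)
  let generator (i : ι) : Algebra.adjoin R (Set.range e) :=
    ⟨e i, Algebra.subset_adjoin ⟨i, rfl⟩⟩
  exact ⟨(Algebra.adjoin R (Set.range e)).val.comp (aeval generator), fun i ↦ by simp [generator]⟩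

end CommutingInvolutions

section ReducedCharPoly

open Polynomial

/-- The polynomial `∏_{k = 0}^{m} (X - (-1)^k (2k + 1) / 2)` annihilating `z` in dimension
`2m + 1`. It is a product over a list so that `aeval` maps it to an ordered product in any, possibly
noncommutative, algebra. -/
noncomputable def reducedCharPoly (K : Type*) [Field K] (m : ℕ) : K[X] :=
  ((List.range (m + 1)).map fun k : ℕ ↦ X - C ((-1) ^ k * (2 * (k : K) + 1) / 2)).prod

variable {K B : Type*} [Field K] [Ring B] [Algebra K B]

theorem aeval_reducedCharPoly (m : ℕ) (z : B) :
    aeval z (reducedCharPoly K m) =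
      ((List.range (m + 1)).map fun k : ℕ ↦
        z - ((-1) ^ k * (2 * (k : K) + 1) / 2) • (1 : B)).prod := by
  simp [reducedCharPoly, map_list_prod, Function.comp_def, Algebra.algebraMap_eq_smul_one]

theorem eval_reducedCharPoly_eq_zero {m k : ℕ} (hk : k ≤ m) :
    (reducedCharPoly K m).eval ((-1) ^ k * (2 * (k : K) + 1) / 2) = 0 := by
  rw [reducedCharPoly, eval_list_prod, List.prod_eq_zero_iff]
  simp only [List.map_map, List.mem_map, List.mem_range]
  exact ⟨k, by omega, by simp⟩

theorem eval_aeval_half_sum_X {ι : Type*} [Fintype ι] (x : ι → K) (p : K[X]) :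
    MvPolynomial.eval x (aeval ((1 / 2 : K) • ∑ i, MvPolynomial.X i) p) =
      p.eval ((∑ i, x i) / 2) := by
  rw [← MvPolynomial.coe_aeval_eq_eval, RingHom.coe_coe, ← aeval_algHom_apply,
    ← coe_aeval_eq_eval]
  simp [div_eq_inv_mul]

theorem eval_signs_eq_zero {ι : Type*} [Fintype ι] {m : ℕ} (hι : Fintype.card ι = 2 * m + 1)
    (ε : ι → ℤˣ) :
    MvPolynomial.eval (fun i ↦ ((ε i : ℤ) : K)) ((∏ i, MvPolynomial.X i + (-1) ^ m) *
      aeval ((1 / 2 : K) • ∑ i, MvPolynomial.X i) (reducedCharPoly K m)) = 0 := by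
  rw [map_mul, eval_aeval_half_sum_X, ← Int.cast_sum]
  by_cases h : ∏ i, ε i = (-1) ^ m
  · obtain ⟨k, hk, hsum⟩ := exists_sum_intUnits_eq hι h
    rw [hsum]
    push_cast
    rw [eval_reducedCharPoly_eq_zero hk, mul_zero]
  · have prod_eq_neg : ∏ i, (ε i : ℤ) = -(-1) ^ m := by
      rw [← Units.coe_prod, Int.units_ne_iff_eq_neg.1 h]
      simp
    have cast_prod_eq_neg : ∏ i, ((ε i : ℤ) : K) = -(-1) ^ m := by
      exact_mod_cast congrArg (Int.cast : ℤ → K) prod_eq_neg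
    simp [cast_prod_eq_neg]

theorem aeval_half_sum_reducedCharPoly_eq_zero (hK : ringChar K ≠ 2) {m : ℕ}
    {e : Fin (2 * m + 1) → B} (he : ∀ i j, Commute (e i) (e j)) (he_sq : ∀ i, e i * e i = 1)
    (he_prod : (List.ofFn e).prod = (-1) ^ m) :
    aeval ((1 / 2 : K) • ∑ i, e i) (reducedCharPoly K m) = 0 := by
  obtain ⟨φ, hφ⟩ := exists_algHom_mvPolynomial_of_commute (R := K) he
  have φ_prod : φ (∏ i, .X i) = (-1) ^ m := by
    rw [← List.prod_ofFn, map_list_prod, List.map_ofFn, ← he_prod]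
    simp [Function.comp_def, hφ]
  have φ_half_sum : φ ((1 / 2 : K) • ∑ i, .X i) = (1 / 2 : K) • ∑ i, e i := by
    simp [hφ]
  have φ_eq_zero := algHom_eq_zero_of_eval_signs_eq_zero hK φ (by simpa only [hφ] using he_sq)
    (eval_signs_eq_zero (Fintype.card_fin (2 * m + 1)))
  have two_smul_eq_zero :
      (2 : K) • ((-1 : B) ^ m * aeval ((1 / 2 : K) • ∑ i, e i) (reducedCharPoly K m)) = 0 := by
    rwa [map_mul, map_add, φ_prod, map_pow, map_neg, map_one, ← aeval_algHom_apply, φ_half_sum,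
      add_mul, ← two_smul K] at φ_eq_zero
  have neg_one_pow_mul_eq_zero := (smul_eq_zero_iff_right (Ring.two_ne_zero hK)).1 two_smul_eq_zero
  exact (isUnit_neg_one.pow m).mul_right_eq_zero.1 neg_one_pow_mul_eq_zero

end ReducedCharPoly

section JointEigenspaces

theorem sum_finrank_le_finrank_of_iSupIndep {ι K V : Type*} [Fintype ι] [DivisionRing K]
    [AddCommGroup V] [Module K V] [FiniteDimensional K V] {W : ι → Submodule K V}
    (hW : iSupIndep W) : ∑ i, finrank K (W i) ≤ finrank K V := by
  classical
  rw [← finrank_directSum]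
  exact LinearMap.finrank_le_finrank_of_injective hW.dfinsupp_lsum_injective

theorem iSupIndep_iInf_eigenspace_of_commute {ι R V : Type*} [CommRing R] [IsDomain R]
    [AddCommGroup V] [Module R V] [IsTorsionFree R V] {f : ι → End R V}
    (hf : ∀ i j, Commute (f i) (f j)) :
    iSupIndep fun χ : ι → R ↦ ⨅ i, (f i).eigenspace (χ i) :=
  (End.independent_iInf_maxGenEigenspace_of_forall_mapsTo f fun i j μ ↦
    End.mapsTo_maxGenEigenspace_of_comm (hf j i) μ).mono fun _ ↦
      iInf_mono fun _ ↦ End.eigenspace_le_maxGenEigenspace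

/-- The elements `x` with `γ a * x * γ a = -x` for `a ∈ T` and `γ a * x * γ a = x` for `a ∉ T`. For
involutions `γ a` this is a joint eigenspace of the conjugations by the `γ a`. -/
def signSpace {ι A : Type*} (R : Type*) [CommRing R] [Ring A] [Algebra R A] [DecidableEq ι]
    (γ : ι → A) (T : Finset ι) : Submodule R A :=
  ⨅ a, End.eigenspace (LinearMap.mulLeftRight R (γ a, γ a)) (if a ∈ T then -1 else 1)

theorem mem_signSpace {ι R A : Type*} [CommRing R] [Ring A] [Algebra R A] [DecidableEq ι]
    {γ : ι → A} {T : Finset ι} {x : A} :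
    x ∈ signSpace R γ T ↔ ∀ a, γ a * x * γ a = (if a ∈ T then -1 else 1 : R) • x := by
  simp [signSpace]

end JointEigenspaces

/-- A Clifford family: pairwise anticommuting elements of square `1`. Away from characteristic `2`
this is the relation `γ a * γ b + γ b * γ a = 2 δ_{ab}`. -/
structure IsCliffordFamily_s3 {ι A : Type*} [Ring A] (γ : ι → A) : Prop where
  mul_self : ∀ a, γ a * γ a = 1
  anticomm : Pairwise fun a b ↦ γ a * γ b = -(γ b * γ a)

/-- The volume element `ω = γ 0 * γ 1 * ⋯ * γ (n - 1)`. -/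
def volumeElement {A : Type*} [Ring A] {n : ℕ} (γ : Fin n → A) : A :=
  (List.ofFn γ).prod

section VolumeElement

variable {A : Type*} [Ring A] {n : ℕ}

theorem volumeElement_succ (γ : Fin (n + 1) → A) :
    volumeElement γ = γ 0 * volumeElement (γ ∘ Fin.succ) := by
  simp [volumeElement, Function.comp_def]

theorem mul_volumeElement_of_anticomm {γ : Fin n → A} {x : A} (hx : ∀ a, x * γ a = -(γ a * x)) :
    x * volumeElement γ = (-1 : ℤ) ^ n • (volumeElement γ * x) := by
  induction n with
  | zero => simp [volumeElement]
  | succ n ih =>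
    have x_mul_tail : x * volumeElement (γ ∘ Fin.succ) =
        (-1 : ℤ) ^ n • (volumeElement (γ ∘ Fin.succ) * x) := ih fun a ↦ hx a.succ
    rw [volumeElement_succ, ← mul_assoc, hx, neg_mul, mul_assoc, x_mul_tail, mul_smul_comm,
      ← mul_assoc, pow_succ, mul_neg_one, neg_smul]

theorem prod_ofFn_tmul_self {R : Type*} [CommRing R] [Algebra R A] (γ : Fin n → A) :
    (List.ofFn fun a ↦ γ a ⊗ₜ[R] γ a).prod = volumeElement γ ⊗ₜ volumeElement γ := by
  have h := (List.finRange n).prod_hom₂ (fun x y : A ↦ x ⊗ₜ[R] y)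
    (fun _ _ _ _ ↦ (Algebra.TensorProduct.tmul_mul_tmul _ _ _ _).symm) rfl γ γ
  simpa only [volumeElement, List.ofFn_eq_map] using h

end VolumeElement

namespace IsCliffordFamily_s3

section Ring

variable {ι A : Type*} [Ring A] {n : ℕ}

theorem of_mul_add_mul {R : Type*} [CommRing R] [IsDomain R] [Algebra R A] [IsTorsionFree R A]
    [DecidableEq ι] (hR : ringChar R ≠ 2) {γ : ι → A}
    (h : ∀ a b, γ a * γ b + γ b * γ a = if a = b then (2 : R) • 1 else 0) :
    IsCliffordFamily_s3 γ where
  mul_self a := by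
    have two_smul_eq : (2 : R) • (γ a * γ a) = (2 : R) • 1 := by
      rw [two_smul, h, if_pos rfl]
    exact smul_right_injective A (Ring.two_ne_zero hR) two_smul_eq
  anticomm a b hab := eq_neg_of_add_eq_zero_left (by rw [h, if_neg hab])

theorem comp_injective {κ : Type*} {γ : ι → A} (hγ : IsCliffordFamily_s3 γ) {f : κ → ι}
    (hf : f.Injective) : IsCliffordFamily_s3 (γ ∘ f) where
  mul_self a := hγ.mul_self (f a)
  anticomm _ _ hab := hγ.anticomm (hf.ne hab)

theorem isUnit {γ : ι → A} (hγ : IsCliffordFamily_s3 γ) (a : ι) : IsUnit (γ a) :=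
  ⟨⟨γ a, γ a, hγ.mul_self a, hγ.mul_self a⟩, rfl⟩

theorem head_mul_volumeElement {γ : Fin (n + 1) → A} (hγ : IsCliffordFamily_s3 γ) :
    γ 0 * volumeElement (γ ∘ Fin.succ) = (-1 : ℤ) ^ n • (volumeElement (γ ∘ Fin.succ) * γ 0) :=
  mul_volumeElement_of_anticomm fun b ↦ hγ.anticomm (Fin.succ_ne_zero b).symm

theorem mul_volumeElement {γ : Fin n → A} (hγ : IsCliffordFamily_s3 γ) (a : Fin n) :
    γ a * volumeElement γ = (-1 : ℤ) ^ (n + 1) • (volumeElement γ * γ a) := by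
  induction n with
  | zero => exact a.elim0
  | succ n ih =>
    rw [volumeElement_succ]
    cases a using Fin.cases with
    | zero =>
      conv_lhs => rw [hγ.head_mul_volumeElement]
      rw [mul_smul_comm, mul_assoc, pow_succ _ (n + 1), pow_succ _ n, mul_neg_one, mul_neg_one,
        neg_neg]
    | succ a =>
      have mul_tail : γ a.succ * volumeElement (γ ∘ Fin.succ) =
          (-1 : ℤ) ^ (n + 1) • (volumeElement (γ ∘ Fin.succ) * γ a.succ) :=
        ih (hγ.comp_injective (Fin.succ_injective n)) a
      rw [← mul_assoc, hγ.anticomm (Fin.succ_ne_zero a), neg_mul, mul_assoc, mul_tail,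
        mul_smul_comm, ← mul_assoc, pow_succ _ (n + 1), mul_neg_one, neg_smul]

theorem commute_volumeElement (hn : Odd n) {γ : Fin n → A} (hγ : IsCliffordFamily_s3 γ) (a : Fin n) :
    Commute (γ a) (volumeElement γ) := by
  rw [Commute, SemiconjBy, hγ.mul_volumeElement, hn.add_one.neg_one_pow, one_smul]

theorem volumeElement_mul_self {γ : Fin n → A} (hγ : IsCliffordFamily_s3 γ) :
    volumeElement γ * volumeElement γ = (-1 : ℤ) ^ n.choose 2 • 1 := by
  induction n with
  | zero => simp [volumeElement]
  | succ n ih =>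
    have tail_sq := ih (hγ.comp_injective (Fin.succ_injective n))
    have head_mul_tail := hγ.head_mul_volumeElement
    rw [volumeElement_succ]
    set ω := volumeElement (γ ∘ Fin.succ)
    calc γ 0 * ω * (γ 0 * ω) = γ 0 * ω * ((-1 : ℤ) ^ n • (ω * γ 0)) :=
          congrArg (γ 0 * ω * ·) head_mul_tail
      _ = (-1 : ℤ) ^ n • (γ 0 * (ω * ω) * γ 0) := by
          rw [mul_smul_comm]
          simp only [mul_assoc]
      _ = (-1 : ℤ) ^ n • (-1 : ℤ) ^ n.choose 2 • (γ 0 * γ 0) := by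
          rw [tail_sq, mul_smul_comm, mul_one, smul_mul_assoc]
      _ = (-1 : ℤ) ^ (n + 1).choose 2 • 1 := by
          rw [hγ.mul_self, smul_smul, ← pow_add, Nat.choose_succ_succ' n 1, Nat.choose_one_right]

end Ring

section Algebra

variable {ι R A : Type*} [CommRing R] [Ring A] [Algebra R A] {n : ℕ}

theorem commute_tmul_self {γ : ι → A} (hγ : IsCliffordFamily_s3 γ) (a b : ι) :
    Commute (γ a ⊗ₜ[R] γ a) (γ b ⊗ₜ[R] γ b) := by
  rcases eq_or_ne a b with rfl | hab
  · exact Commute.refl _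
  · rw [Commute, SemiconjBy, Algebra.TensorProduct.tmul_mul_tmul, hγ.anticomm hab, neg_tmul,
      tmul_neg, neg_neg, Algebra.TensorProduct.tmul_mul_tmul]

theorem commute_mulLeftRight {γ : ι → A} (hγ : IsCliffordFamily_s3 γ) (a b : ι) :
    Commute (LinearMap.mulLeftRight R (γ a, γ a) : End R A)
      (LinearMap.mulLeftRight R (γ b, γ b)) := by
  rcases eq_or_ne a b with rfl | hab
  · exact Commute.refl _
  ext x
  simp only [End.mul_apply, LinearMap.mulLeftRight_apply]
  calc γ a * (γ b * x * γ b) * γ a = (γ a * γ b) * x * (γ b * γ a) := by simp only [mul_assoc]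
    _ = (γ b * γ a) * x * (γ a * γ b) := by
      rw [hγ.anticomm hab, hγ.anticomm hab.symm]
      simp only [neg_mul, mul_neg, neg_neg]
    _ = γ b * (γ a * x * γ a) * γ b := by simp only [mul_assoc]

theorem iSupIndep_signSpace [IsDomain R] [IsTorsionFree R A] [DecidableEq ι]
    (hR : ringChar R ≠ 2) {γ : ι → A} (hγ : IsCliffordFamily_s3 γ) :
    iSupIndep (signSpace R γ) := by
  have sign_injective :
      Function.Injective fun (T : Finset ι) a ↦ if a ∈ T then (-1 : R) else 1 := by
    intro S T hST
    ext a
    have neg_one_ne_one := Ring.neg_one_ne_one_of_char_ne_two hR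
    have sign_eq := congrFun hST a
    by_cases hS : a ∈ S <;> by_cases hT : a ∈ T <;> simp_all [neg_one_ne_one.symm]
  exact (iSupIndep_iInf_eigenspace_of_commute hγ.commute_mulLeftRight).comp sign_injective

-- `γ 0 * γ b.succ` commutes with every `γ a.succ` except `γ b.succ`, with which it anticommutes.
theorem exists_isUnit_mem_signSpace {γ : Fin (n + 1) → A} (hγ : IsCliffordFamily_s3 γ)
    (T : Finset (Fin n)) : ∃ w, IsUnit w ∧ w ∈ signSpace R (γ ∘ Fin.succ) T := by
  induction T using Finset.induction_on with
  | empty => exact ⟨1, isUnit_one, mem_signSpace.2 fun a ↦ by simp [hγ.mul_self]⟩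
  | insert b T hb ih =>
    obtain ⟨w, hw, hwT⟩ := ih
    refine ⟨γ 0 * γ b.succ * w, ((hγ.isUnit _).mul (hγ.isUnit _)).mul hw,
      mem_signSpace.2 fun a ↦ ?_⟩
    have mul_flip : γ a.succ * (γ 0 * γ b.succ) =
        (if a = b then -1 else 1 : R) • (γ 0 * γ b.succ * γ a.succ) := by
      rw [← mul_assoc, hγ.anticomm (Fin.succ_ne_zero a), neg_mul, mul_assoc]
      split_ifs with hab
      · rw [hab, neg_one_smul, mul_assoc]
      · rw [hγ.anticomm ((Fin.succ_injective n).ne hab), mul_neg, neg_neg, one_smul, mul_assoc]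
    have conj_w : γ a.succ * w * γ a.succ = (if a ∈ T then -1 else 1 : R) • w :=
      mem_signSpace.1 hwT a
    calc γ a.succ * (γ 0 * γ b.succ * w) * γ a.succ
        = (γ a.succ * (γ 0 * γ b.succ)) * (w * γ a.succ) := by simp only [mul_assoc]
      _ = (if a = b then -1 else 1 : R) • (γ 0 * γ b.succ * (γ a.succ * w * γ a.succ)) := by
        rw [mul_flip, smul_mul_assoc]
        simp only [mul_assoc]
      _ = (if a ∈ insert b T then -1 else 1 : R) • (γ 0 * γ b.succ * w) := by
        rw [conj_w, mul_smul_comm, smul_smul]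
        congr 1
        by_cases hab : a = b <;> simp_all

end Algebra

section FiniteDimensional

variable {K A : Type*} [Field K] [Ring A] [Algebra K A] {n : ℕ}

theorem finrank_signSpace_eq_one (hK : ringChar K ≠ 2) {γ : Fin (n + 1) → A}
    (hγ : IsCliffordFamily_s3 γ) (hA : finrank K A = 2 ^ n) (T : Finset (Fin n)) :
    finrank K (signSpace K (γ ∘ Fin.succ) T) = 1 := by
  have : FiniteDimensional K A := .of_finrank_pos (by simp [hA])
  have : Nontrivial A := nontrivial_of_finrank_pos (R := K) (by simp [hA])
  have one_le (S : Finset (Fin n)) : 1 ≤ finrank K (signSpace K (γ ∘ Fin.succ) S) := by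
    obtain ⟨w, hw, hwS⟩ := hγ.exists_isUnit_mem_signSpace (R := K) S
    exact Submodule.one_le_finrank_iff.2 fun h ↦ hw.ne_zero (by simpa [h] using hwS)
  have sum_le : ∑ S, finrank K (signSpace K (γ ∘ Fin.succ) S) ≤ ∑ S : Finset (Fin n), 1 := by
    simpa [hA] using sum_finrank_le_finrank_of_iSupIndep
      ((hγ.comp_injective (Fin.succ_injective n)).iSupIndep_signSpace hK)
  have sum_eq := (Finset.sum_le_sum fun S _ ↦ one_le S).antisymm sum_le
  exact ((Finset.sum_eq_sum_iff_of_le fun S _ ↦ one_le S).1 sum_eq T (Finset.mem_univ T)).symm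

theorem exists_eq_smul_one_of_commute (hK : ringChar K ≠ 2) {γ : Fin (n + 1) → A}
    (hγ : IsCliffordFamily_s3 γ) (hA : finrank K A = 2 ^ n) {x : A}
    (hx : ∀ a : Fin n, Commute (γ a.succ) x) : ∃ c : K, x = c • 1 := by
  have : Nontrivial A := nontrivial_of_finrank_pos (R := K) (by simp [hA])
  have mem_of_commute {y : A} (hy : ∀ a : Fin n, Commute (γ a.succ) y) :
      y ∈ signSpace K (γ ∘ Fin.succ) ∅ :=
    mem_signSpace.2 fun a ↦ by simp [(hy a).eq, mul_assoc, hγ.mul_self]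
  let one' : signSpace K (γ ∘ Fin.succ) ∅ := ⟨1, mem_of_commute fun _ ↦ Commute.one_right _⟩
  obtain ⟨c, hc⟩ := (finrank_eq_one_iff_of_nonzero' one' (by simp [one', Subtype.ext_iff])).1
    (hγ.finrank_signSpace_eq_one hK hA ∅) ⟨x, mem_of_commute hx⟩
  exact ⟨c, (congrArg Subtype.val hc).symm⟩

theorem volumeElement_tmul_volumeElement (hK : ringChar K ≠ 2) {m : ℕ} {γ : Fin (2 * m + 1) → A}
    (hγ : IsCliffordFamily_s3 γ) (hA : finrank K A = 4 ^ m) :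
    volumeElement γ ⊗ₜ[K] volumeElement γ = (-1) ^ m := by
  obtain ⟨c, hc⟩ := hγ.exists_eq_smul_one_of_commute hK (hA.trans (pow_mul 2 2 m).symm) fun a ↦
    hγ.commute_volumeElement (odd_two_mul_add_one m) a.succ
  have ω_sq := hγ.volumeElement_mul_self
  set ω := volumeElement γ
  calc ω ⊗ₜ[K] ω = (1 : A) ⊗ₜ[K] (ω * ω) := by
        nth_rw 1 3 [hc]
        rw [smul_tmul, smul_one_mul]
    _ = (-1 : ℤ) ^ m • (1 : A ⊗[K] A) := by
        rw [ω_sq, neg_one_pow_two_mul_add_one_choose_two, tmul_smul,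
          Algebra.TensorProduct.one_def]
    _ = (-1) ^ m := by simp

end FiniteDimensional

end IsCliffordFamily_s3

section Main

open Polynomial

variable {K : Type*} [Field K]

theorem clifford_z_char_poly_odd_general {A : Type*} [Ring A] [Algebra K A] (hK : ringChar K ≠ 2)
    {m : ℕ} (hA : finrank K A = 4 ^ m) {γ : Fin (2 * m + 1) → A} (hγ : IsCliffordFamily_s3 γ) :
    aeval ((1 / 2 : K) • ∑ a, γ a ⊗ₜ[K] γ a) (reducedCharPoly K m) = 0 := by
  refine aeval_half_sum_reducedCharPoly_eq_zero hK hγ.commute_tmul_self (fun a ↦ ?_) ?_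
  · rw [Algebra.TensorProduct.tmul_mul_tmul, hγ.mul_self, Algebra.TensorProduct.one_def]
  · rw [prod_ofFn_tmul_self, hγ.volumeElement_tmul_volumeElement hK hA]

theorem aeval_half_sum_kronecker_reducedCharPoly_eq_zero {n : Type*} [Fintype n] [DecidableEq n]
    (hK : ringChar K ≠ 2) {m : ℕ} (hn : Fintype.card n = 2 ^ m)
    {γ : Fin (2 * m + 1) → Matrix n n K} (hγ : IsCliffordFamily_s3 γ) :
    aeval ((1 / 2 : K) • ∑ a, γ a ⊗ₖ γ a) (reducedCharPoly K m) = 0 := by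
  have finrank_eq : finrank K (Matrix n n K) = 4 ^ m := by
    rw [finrank_matrix, finrank_self, hn, mul_one, ← mul_pow]
    norm_num
  have h := congrArg (Matrix.kroneckerAlgEquiv n n K)
    (clifford_z_char_poly_odd_general hK finrank_eq hγ)
  rw [← aeval_algHom_apply] at h
  simpa using h

end Main

/-- Reduced characteristic polynomial identity for `z = (1/2)·Σ_{a=1}^{2m+1} γ^a ⊗ γ^a`
built from a Clifford family of size `N = 2^m` in odd dimension `d = 2m+1`:
`∏_{k=0}^{m} (z − (−1)^k·(2k+1)/2 · 1) = 0`. -/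
theorem clifford_z_char_poly_odd {m : ℕ}
    (γ : Fin (2 * m + 1) → Matrix (Fin (2 ^ m)) (Fin (2 ^ m)) ℂ)
    (hγ : ∀ a b, γ a * γ b + γ b * γ a =
      if a = b then (2 : ℂ) • (1 : Matrix (Fin (2 ^ m)) (Fin (2 ^ m)) ℂ) else 0)
    (z : Matrix (Fin (2 ^ m) × Fin (2 ^ m)) (Fin (2 ^ m) × Fin (2 ^ m)) ℂ)
    (hz : z = (1/2 : ℂ) • ∑ a, γ a ⊗ₖ γ a) :
    ((List.range (m + 1)).map
      (fun k => z - (((-1 : ℂ) ^ k * (2 * (k : ℂ) + 1) / 2) •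
        (1 : Matrix (Fin (2 ^ m) × Fin (2 ^ m)) (Fin (2 ^ m) × Fin (2 ^ m)) ℂ)))).prod
      = 0 := by
  subst hz
  simpa [aeval_reducedCharPoly, ← List.map_eq_flatMap, Function.comp_def] using
    aeval_half_sum_kronecker_reducedCharPoly_eq_zero (by simp) (Fintype.card_fin (2 ^ m))
      (.of_mul_add_mul (R := ℂ) (by simp) hγ)
end

section
/- Let γ^1,…,γ^d be a Clifford family of N×N complex matrices and let z = (1/2)·Σ_{a=1}^d γ^a ⊗ γ^a. Then for every index a: z·(γ^a ⊗ 1 + 1 ⊗ γ^a) = (γ^a ⊗ 1 + 1 ⊗ γ^a)·(1 − z) and z·(γ^a ⊗ 1 − 1 ⊗ γ^a) = (γ^a ⊗ 1 − 1 ⊗ γ^a)·(−1 − z). -/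
open Kronecker

/-!
The factors `x a = γ a ⊗ 1` and `y a = 1 ⊗ γ a` are two Clifford families that commute with each
other, and `2 z = ∑ a, x a * y a`. As `y b` commutes with `x a`, the anticommutator of `x b * y b`
with `x a` is `(x b * x a + x a * x b) * y b`, so only the term `b = a` survives and
`z * x a + x a * z = y a`. Exchanging the families gives `z * y a + y a * z = x a`, and adding
or subtracting the two relations yields the commutation of `z` with `x a ± y a`.
-/

/-- A Clifford family: the defining relations of the generators of a Euclidean Clifford algebra,
imposed on a family of elements of a semiring. The scalar `2` stands for `2 • 1`,
so that in a matrix semiring it is twice the identity matrix. -/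
def IsCliffordFamily_s4 {ι A : Type*} [DecidableEq ι] [Semiring A] (γ : ι → A) : Prop :=
  ∀ a b, γ a * γ b + γ b * γ a = if a = b then 2 else 0

section Anticommutator

variable {A : Type*} [Ring A] {x y z : A}

theorem mul_add_eq_add_mul_one_sub_of_anticommutator
    (hx : z * x + x * z = y) (hy : z * y + y * z = x) :
    z * (x + y) = (x + y) * (1 - z) := by
  rw [mul_add, eq_sub_of_add_eq hx, eq_sub_of_add_eq hy]
  noncomm_ring

theorem mul_sub_eq_sub_mul_neg_one_sub_of_anticommutator
    (hx : z * x + x * z = y) (hy : z * y + y * z = x) :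
    z * (x - y) = (x - y) * (-1 - z) := by
  rw [mul_sub, eq_sub_of_add_eq hx, eq_sub_of_add_eq hy]
  noncomm_ring

end Anticommutator

namespace IsCliffordFamily_s4

section Commuting

variable {ι A : Type*} [Fintype ι] [DecidableEq ι] [Semiring A] {x y : ι → A}

theorem anticommutator_sum_mul_left (hx : IsCliffordFamily_s4 x)
    (hxy : ∀ a b, Commute (x a) (y b)) (a : ι) :
    (∑ b, x b * y b) * x a + x a * ∑ b, x b * y b = 2 * y a := by
  calc (∑ b, x b * y b) * x a + x a * ∑ b, x b * y b
      = ∑ b, (x b * x a + x a * x b) * y b := by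
        simp only [Finset.sum_mul, Finset.mul_sum, ← Finset.sum_add_distrib, add_mul,
          (hxy a _).right_comm, mul_assoc]
    _ = 2 * y a := by simp [hx _ a]

variable {R : Type*} [CommSemiring R] [Invertible (2 : R)] [Algebra R A]

theorem anticommutator_half_sum_mul_left (hx : IsCliffordFamily_s4 x)
    (hxy : ∀ a b, Commute (x a) (y b)) (a : ι) :
    (⅟(2 : R) • ∑ b, x b * y b) * x a + x a * (⅟(2 : R) • ∑ b, x b * y b) = y a := by
  rw [smul_mul_assoc, mul_smul_comm, ← smul_add, hx.anticommutator_sum_mul_left hxy,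
    invOf_smul_eq_iff, ofNat_smul_eq_nsmul, two_nsmul, two_mul]

theorem anticommutator_half_sum_mul_right (hy : IsCliffordFamily_s4 y)
    (hxy : ∀ a b, Commute (x a) (y b)) (a : ι) :
    (⅟(2 : R) • ∑ b, x b * y b) * y a + y a * (⅟(2 : R) • ∑ b, x b * y b) = x a := by
  simpa only [(hxy _ _).eq] using
    hy.anticommutator_half_sum_mul_left (R := R) (fun a b => (hxy b a).symm) a

end Commuting

section Kronecker

variable {ι m n R : Type*} [DecidableEq ι] [Fintype m] [DecidableEq m] [Fintype n] [DecidableEq n]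
  [CommSemiring R]

theorem kronecker_one {γ : ι → Matrix m m R} (hγ : IsCliffordFamily_s4 γ) :
    IsCliffordFamily_s4 fun a => γ a ⊗ₖ (1 : Matrix n n R) := by
  intro a b
  simp only [← Matrix.mul_kronecker_mul, ← Matrix.add_kronecker, one_mul, hγ a b]
  split_ifs <;> simp [← one_add_one_eq_two, Matrix.add_kronecker]

theorem one_kronecker {γ : ι → Matrix n n R} (hγ : IsCliffordFamily_s4 γ) :
    IsCliffordFamily_s4 fun a => (1 : Matrix m m R) ⊗ₖ γ a := by
  intro a b
  simp only [← Matrix.mul_kronecker_mul, ← Matrix.kronecker_add, one_mul, hγ a b]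
  split_ifs <;> simp [← one_add_one_eq_two, Matrix.kronecker_add]

end Kronecker

end IsCliffordFamily_s4

theorem commute_kronecker_one_one_kronecker {m n R : Type*} [Fintype m] [DecidableEq m]
    [Fintype n] [DecidableEq n] [CommSemiring R] (M : Matrix m m R) (M' : Matrix n n R) :
    Commute (M ⊗ₖ (1 : Matrix n n R)) ((1 : Matrix m m R) ⊗ₖ M') := by
  simp only [Commute, SemiconjBy, ← Matrix.mul_kronecker_mul, one_mul, mul_one]

theorem clifford_z_cpm_commutation_general {ι R A : Type*} [Fintype ι] [DecidableEq ι]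
    [CommSemiring R] [Invertible (2 : R)] [Ring A] [Algebra R A] {x y : ι → A}
    (hx : IsCliffordFamily_s4 x) (hy : IsCliffordFamily_s4 y) (hxy : ∀ a b, Commute (x a) (y b))
    {z : A} (hz : z = ⅟(2 : R) • ∑ a, x a * y a) (a : ι) :
    z * (x a + y a) = (x a + y a) * (1 - z) ∧ z * (x a - y a) = (x a - y a) * (-1 - z) := by
  have hzx : z * x a + x a * z = y a := hz ▸ hx.anticommutator_half_sum_mul_left hxy a
  have hzy : z * y a + y a * z = x a := hz ▸ hy.anticommutator_half_sum_mul_right hxy a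
  exact ⟨mul_add_eq_add_mul_one_sub_of_anticommutator hzx hzy,
    mul_sub_eq_sub_mul_neg_one_sub_of_anticommutator hzx hzy⟩

/-- Key commutation relation `z·c_± = c_±·(−z ± 1)` for `z = (1/2)·Σ_a γ^a ⊗ γ^a` and
`c_± = γ^a ⊗ 1 ± 1 ⊗ γ^a`, where `γ^1,…,γ^d` is a Clifford family. -/
theorem clifford_z_cpm_commutation {d N : ℕ}
    (γ : Fin d → Matrix (Fin N) (Fin N) ℂ)
    (hγ : ∀ a b, γ a * γ b + γ b * γ a =
      if a = b then (2 : ℂ) • (1 : Matrix (Fin N) (Fin N) ℂ) else 0)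
    (z : Matrix (Fin N × Fin N) (Fin N × Fin N) ℂ)
    (hz : z = (1/2 : ℂ) • ∑ a, γ a ⊗ₖ γ a) :
    ∀ a : Fin d,
      z * (γ a ⊗ₖ (1 : Matrix (Fin N) (Fin N) ℂ) + (1 : Matrix (Fin N) (Fin N) ℂ) ⊗ₖ γ a) =
        (γ a ⊗ₖ (1 : Matrix (Fin N) (Fin N) ℂ) + (1 : Matrix (Fin N) (Fin N) ℂ) ⊗ₖ γ a) *
          ((1 : Matrix (Fin N × Fin N) (Fin N × Fin N) ℂ) - z) ∧
      z * (γ a ⊗ₖ (1 : Matrix (Fin N) (Fin N) ℂ) - (1 : Matrix (Fin N) (Fin N) ℂ) ⊗ₖ γ a) =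
        (γ a ⊗ₖ (1 : Matrix (Fin N) (Fin N) ℂ) - (1 : Matrix (Fin N) (Fin N) ℂ) ⊗ₖ γ a) *
          (-(1 : Matrix (Fin N × Fin N) (Fin N × Fin N) ℂ) - z) := by
  have hγ' : IsCliffordFamily_s4 γ := fun a b => by
    rw [hγ a b, ofNat_smul_eq_nsmul, two_nsmul, one_add_one_eq_two]
  exact clifford_z_cpm_commutation_general (R := ℂ) hγ'.kronecker_one hγ'.one_kronecker
    (fun a b => commute_kronecker_one_one_kronecker (γ a) (γ b))
    (by simpa [← Matrix.mul_kronecker_mul] using hz)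
end

section
/- Let n ≥ 2, V = ℂ^n, P the flip operator on V ⊗ V, and K the operator on V ⊗ V with matrix entries K^{a_1 a_2}_{b_1 b_2} = δ^{a_1 a_2}·δ_{b_1 b_2}. Set κ := n/2 − 1 and define R(u) := u(u+κ)·1 + (u+κ)·P − u·K. Then R satisfies the Yang–Baxter equation: for all complex u, v, R_{12}(u−v) · R_{13}(u) · R_{23}(v) = R_{23}(v) · R_{13}(u) · R_{12}(u−v) on V ⊗ V ⊗ V, where R_{ij}(u) acts as R(u) on the i-th and j-th tensor factors and as the identity on the third. -/
/-- The flip (permutation) operator on `ℂ^n ⊗ ℂ^n`, `P(x⊗y) = y⊗x`. -/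
def flipOp (n : ℕ) : Matrix (Fin n × Fin n) (Fin n × Fin n) ℂ :=
  Matrix.of fun p q => if p.1 = q.2 ∧ p.2 = q.1 then 1 else 0

/-- The operator `K` on `ℂ^n ⊗ ℂ^n` with entries `K^{a₁a₂}_{b₁b₂} = δ^{a₁a₂}·δ_{b₁b₂}`. -/
def trOp (n : ℕ) : Matrix (Fin n × Fin n) (Fin n × Fin n) ℂ :=
  Matrix.of fun p q => if p.1 = p.2 ∧ q.1 = q.2 then 1 else 0

/-- The fundamental (vector) R-matrix with `so(n)` symmetry:
`R(u) = u(u+κ)·1 + (u+κ)·P − u·K`, `κ = n/2 − 1`. -/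
noncomputable def soR (n : ℕ) (u : ℂ) : Matrix (Fin n × Fin n) (Fin n × Fin n) ℂ :=
  (u * (u + ((n : ℂ) / 2 - 1))) • (1 : Matrix (Fin n × Fin n) (Fin n × Fin n) ℂ) +
    (u + ((n : ℂ) / 2 - 1)) • flipOp n - u • trOp n

/-- `R₁₂(u)` on `ℂ^n ⊗ ℂ^n ⊗ ℂ^n`. -/
noncomputable def soR12 (n : ℕ) (u : ℂ) :
    Matrix (Fin n × Fin n × Fin n) (Fin n × Fin n × Fin n) ℂ :=
  Matrix.of fun p q =>
    soR n u (p.1, p.2.1) (q.1, q.2.1) * (if p.2.2 = q.2.2 then 1 else 0)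

/-- `R₁₃(u)` on `ℂ^n ⊗ ℂ^n ⊗ ℂ^n`. -/
noncomputable def soR13 (n : ℕ) (u : ℂ) :
    Matrix (Fin n × Fin n × Fin n) (Fin n × Fin n × Fin n) ℂ :=
  Matrix.of fun p q =>
    soR n u (p.1, p.2.2) (q.1, q.2.2) * (if p.2.1 = q.2.1 then 1 else 0)

/-- `R₂₃(u)` on `ℂ^n ⊗ ℂ^n ⊗ ℂ^n`. -/
noncomputable def soR23 (n : ℕ) (u : ℂ) :
    Matrix (Fin n × Fin n × Fin n) (Fin n × Fin n × Fin n) ℂ :=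
  Matrix.of fun p q =>
    soR n u (p.2.1, p.2.2) (q.2.1, q.2.2) * (if p.1 = q.1 then 1 else 0)

/-!
Conjugation by `P₁₂` turns `R₂₃` into `R₁₃`, so moving all the flips to the right reduces the
Yang–Baxter equation for `R` to the braid form `Ř₁(u-v) Ř₂(u) Ř₁(v) = Ř₂(v) Ř₁(u) Ř₂(u-v)` of
`Ř = P R`. There only the operators `P` and `K` on adjacent factors occur. They represent the Brauer
algebra with loop parameter `n`, and rewriting all words of length three in a basis of that algebra
leaves identities between polynomials in `u`, `v`, `κ` that hold because `n = 2 (κ + 1)`.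
-/

open scoped Matrix

section BrauerAlgebra

variable {R A : Type*} [CommRing R] [Ring A] [Algebra R A]

/-- The defining relations of the Brauer algebra `B₃(δ)` on three strands: `s 0`, `s 1` are the
adjacent transpositions and `e 0`, `e 1` the corresponding cup-cap generators. -/
structure BrauerRelations (δ : R) (s e : Fin 2 → A) : Prop where
  s_mul_s (i : Fin 2) : s i * s i = 1
  e_mul_e (i : Fin 2) : e i * e i = δ • e i
  s_mul_e (i : Fin 2) : s i * e i = e i
  e_mul_s (i : Fin 2) : e i * s i = e i
  braid ⦃i j : Fin 2⦄ (hij : i ≠ j) : s i * s j * s i = s j * s i * s j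
  e_mul_e_mul_e ⦃i j : Fin 2⦄ (hij : i ≠ j) : e i * e j * e i = e i
  s_mul_e_mul_e ⦃i j : Fin 2⦄ (hij : i ≠ j) : s i * e j * e i = s j * e i
  e_mul_e_mul_s ⦃i j : Fin 2⦄ (hij : i ≠ j) : e i * e j * s i = e i * s j

/-- The rational R-matrix `R(u) = u(u+κ)·1 + (u+κ)·s − u·e` built from Brauer generators. -/
def brauerR (κ u : R) (s e : A) : A :=
  (u * (u + κ)) • (1 : A) + (u + κ) • s - u • e

/-- The braid form `Ř(u) = s R(u)` of `brauerR`, in which the Yang–Baxter equation involves only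
adjacent strands. -/
def brauerRCheck (κ u : R) (s e : A) : A :=
  (u + κ) • (1 : A) + (u * (u + κ)) • s - u • e

namespace BrauerRelations

variable {δ κ : R} {s e : Fin 2 → A} {i j : Fin 2}

lemma e_mul_s_mul_e (h : BrauerRelations δ s e) (hij : i ≠ j) : e i * s j * e i = e i := by
  rw [mul_assoc, ← h.s_mul_e_mul_e hij, ← mul_assoc, ← mul_assoc, h.e_mul_s, h.e_mul_e_mul_e hij]

lemma s_mul_s_mul_e (h : BrauerRelations δ s e) (hij : i ≠ j) : s i * s j * e i = e j * e i := by
  rw [mul_assoc, ← h.s_mul_e_mul_e hij, ← mul_assoc, ← mul_assoc, h.s_mul_s, one_mul]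

lemma e_mul_s_mul_s (h : BrauerRelations δ s e) (hij : i ≠ j) : e i * s j * s i = e i * e j := by
  rw [← h.e_mul_e_mul_s hij, mul_assoc, h.s_mul_s, mul_one]

lemma s_mul_e_mul_s (h : BrauerRelations δ s e) (hij : i ≠ j) :
    s i * e j * s i = s j * e i * s j := by
  rw [← h.s_mul_e_mul_e hij, mul_assoc (s i), mul_assoc (s i), mul_assoc (s i),
    h.e_mul_e_mul_s hij.symm]

lemma s_mul_brauerR (h : BrauerRelations δ s e) (κ u : R) (i : Fin 2) :
    s i * brauerR κ u (s i) (e i) = brauerRCheck κ u (s i) (e i) := by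
  simp only [brauerR, brauerRCheck, mul_sub, mul_add, mul_smul_comm, mul_one, h.s_mul_s, h.s_mul_e]
  abel

lemma brauerR_mul_s (h : BrauerRelations δ s e) (κ u : R) (i : Fin 2) :
    brauerR κ u (s i) (e i) * s i = brauerRCheck κ u (s i) (e i) := by
  simp only [brauerR, brauerRCheck, sub_mul, add_mul, smul_mul_assoc, one_mul, h.s_mul_s, h.e_mul_s]
  abel

lemma s_mul_brauerR_mul_s (h : BrauerRelations δ s e) (hij : i ≠ j) (κ u : R) :
    s i * brauerR κ u (s j) (e j) * s i = s j * brauerR κ u (s i) (e i) * s j := by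
  simp only [brauerR, mul_sub, sub_mul, mul_add, add_mul, mul_smul_comm, smul_mul_assoc, mul_one,
    h.s_mul_s, h.braid hij, h.s_mul_e_mul_s hij]

lemma brauerRCheck_braid (h : BrauerRelations (2 * (κ + 1)) s e) (hij : i ≠ j) (u v : R) :
    brauerRCheck κ u (s i) (e i) * brauerRCheck κ (u + v) (s j) (e j) *
        brauerRCheck κ v (s i) (e i) =
      brauerRCheck κ v (s j) (e j) * brauerRCheck κ (u + v) (s i) (e i) *
        brauerRCheck κ u (s j) (e j) := by
  have hji := hij.symm
  simp only [brauerRCheck, mul_sub, sub_mul, mul_add, add_mul, mul_smul_comm, smul_mul_assoc,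
    mul_one, one_mul, h.s_mul_s, h.e_mul_e, h.s_mul_e, h.e_mul_s,
    h.e_mul_e_mul_e hij, h.e_mul_e_mul_e hji, h.s_mul_e_mul_e hij, h.s_mul_e_mul_e hji,
    h.e_mul_e_mul_s hij, h.e_mul_e_mul_s hji, h.e_mul_s_mul_e hij, h.e_mul_s_mul_e hji,
    h.s_mul_s_mul_e hij, h.s_mul_s_mul_e hji, h.e_mul_s_mul_s hij, h.e_mul_s_mul_s hji,
    h.braid hij, h.s_mul_e_mul_s hij]
  match_scalars <;> ring

lemma s_mul_s_mul_s_mul_brauerRCheck (h : BrauerRelations δ s e) (hij : i ≠ j) (κ u : R) :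
    s i * s j * s i * brauerRCheck κ u (s i) (e i) =
      brauerRCheck κ u (s j) (e j) * (s i * s j * s i) := by
  have hs : s i * s j * s i * s i = s j * (s i * s j * s i) := by
    rw [mul_assoc, h.s_mul_s, mul_one, h.braid hij, ← mul_assoc, ← mul_assoc, h.s_mul_s, one_mul]
  have he : s i * s j * s i * e i = e j * (s i * s j * s i) := by
    rw [mul_assoc, h.s_mul_e, h.s_mul_s_mul_e hij, ← mul_assoc, ← mul_assoc,
      h.e_mul_s_mul_s hij.symm, mul_assoc, h.e_mul_s]
  simp only [brauerRCheck, mul_sub, sub_mul, mul_add, add_mul, mul_smul_comm, smul_mul_assoc,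
    mul_one, one_mul, hs, he]

lemma brauerR_prod_eq (h : BrauerRelations δ s e) (hij : i ≠ j) (κ u v w : R) :
    brauerR κ u (s i) (e i) * (s i * brauerR κ v (s j) (e j) * s i) * brauerR κ w (s j) (e j) =
      brauerRCheck κ u (s i) (e i) * brauerRCheck κ v (s j) (e j) *
        brauerRCheck κ w (s i) (e i) * (s i * s j * s i) := by
  have hv : brauerR κ v (s j) (e j) = brauerRCheck κ v (s j) (e j) * s j := by
    rw [← h.brauerR_mul_s, mul_assoc, h.s_mul_s, mul_one]
  have hw : brauerR κ w (s j) (e j) = s j * brauerRCheck κ w (s j) (e j) := by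
    rw [← h.s_mul_brauerR, ← mul_assoc, h.s_mul_s, one_mul]
  calc
    _ = brauerR κ u (s i) (e i) * s i * brauerRCheck κ v (s j) (e j) *
          (s j * s i * s j * brauerRCheck κ w (s j) (e j)) := by
      simp only [hv, hw, mul_assoc]
    _ = _ := by
      rw [h.brauerR_mul_s, h.s_mul_s_mul_s_mul_brauerRCheck hij.symm, h.braid hij, ← mul_assoc]

theorem brauerR_yangBaxter (h : BrauerRelations (2 * (κ + 1)) s e) (hij : i ≠ j) (u v : R) :
    brauerR κ (u - v) (s i) (e i) * (s i * brauerR κ u (s j) (e j) * s i) *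
        brauerR κ v (s j) (e j) =
      brauerR κ v (s j) (e j) * (s i * brauerR κ u (s j) (e j) * s i) *
        brauerR κ (u - v) (s i) (e i) := by
  have hbraid := h.brauerRCheck_braid hij (u - v) v
  rw [sub_add_cancel] at hbraid
  rw [h.brauerR_prod_eq hij, hbraid, h.s_mul_brauerR_mul_s hij, h.brauerR_prod_eq hij.symm,
    h.braid hij]

end BrauerRelations

end BrauerAlgebra

section Matrices

variable {R ι : Type*} [CommRing R] [Fintype ι] [DecidableEq ι]

lemma matrix_ext_of_mulVec {m n α : Type*} [NonAssocSemiring α] [Fintype n] {M N : Matrix m n α}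
    (h : ∀ f i, (M *ᵥ f) i = (N *ᵥ f) i) : M = N :=
  Matrix.mulVec_injective (funext fun f => funext (h f))

variable (R ι) in
/-- The flip operator on `V ⊗ V` for `V = ι → R`; for `ι = Fin n` and `R = ℂ` it is `flipOp n`
definitionally. -/
def flipMatrix : Matrix (ι × ι) (ι × ι) R :=
  Matrix.of fun p q => if p.1 = q.2 ∧ p.2 = q.1 then 1 else 0

variable (R ι) in
/-- The operator `K` on `V ⊗ V` for `V = ι → R`, that is, evaluation of the standard bilinear form
followed by multiplication with its dual tensor; for `ι = Fin n` and `R = ℂ` it is `trOp n`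
definitionally. -/
def traceMatrix : Matrix (ι × ι) (ι × ι) R :=
  Matrix.of fun p q => if p.1 = p.2 ∧ q.1 = q.2 then 1 else 0

/-- The operator `M₁₂` on `V ⊗ V ⊗ V` acting as `M` on the first two factors, arranged so that
`soR12 n u` is `leg12 (soR n u)` definitionally; likewise for `leg13` and `leg23`. -/
def leg12 (M : Matrix (ι × ι) (ι × ι) R) : Matrix (ι × ι × ι) (ι × ι × ι) R :=
  Matrix.of fun p q => M (p.1, p.2.1) (q.1, q.2.1) * (if p.2.2 = q.2.2 then 1 else 0)

/-- The operator `M₁₃` on `V ⊗ V ⊗ V` acting as `M` on the outer two factors. -/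
def leg13 (M : Matrix (ι × ι) (ι × ι) R) : Matrix (ι × ι × ι) (ι × ι × ι) R :=
  Matrix.of fun p q => M (p.1, p.2.2) (q.1, q.2.2) * (if p.2.1 = q.2.1 then 1 else 0)

/-- The operator `M₂₃` on `V ⊗ V ⊗ V` acting as `M` on the last two factors. -/
def leg23 (M : Matrix (ι × ι) (ι × ι) R) : Matrix (ι × ι × ι) (ι × ι × ι) R :=
  Matrix.of fun p q => M (p.2.1, p.2.2) (q.2.1, q.2.2) * (if p.1 = q.1 then 1 else 0)

lemma flipMatrix_mulVec (f : ι × ι → R) (x : ι × ι) : (flipMatrix R ι *ᵥ f) x = f x.swap := by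
  simp [flipMatrix, Matrix.mulVec, dotProduct, Fintype.sum_prod_type, ite_and, Prod.swap]

lemma traceMatrix_mulVec (f : ι × ι → R) (x : ι × ι) :
    (traceMatrix R ι *ᵥ f) x = if x.1 = x.2 then ∑ i, f (i, i) else 0 := by
  simp [traceMatrix, Matrix.mulVec, dotProduct, Fintype.sum_prod_type, ite_and]

lemma leg12_mulVec (M : Matrix (ι × ι) (ι × ι) R) (f : ι × ι × ι → R) (x : ι × ι × ι) :
    (leg12 M *ᵥ f) x = (M *ᵥ fun p => f (p.1, p.2, x.2.2)) (x.1, x.2.1) := by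
  simp [leg12, Matrix.mulVec, dotProduct, Fintype.sum_prod_type]

lemma leg13_mulVec (M : Matrix (ι × ι) (ι × ι) R) (f : ι × ι × ι → R) (x : ι × ι × ι) :
    (leg13 M *ᵥ f) x = (M *ᵥ fun p => f (p.1, x.2.1, p.2)) (x.1, x.2.2) := by
  simp [leg13, Matrix.mulVec, dotProduct, Fintype.sum_prod_type]

lemma leg23_mulVec (M : Matrix (ι × ι) (ι × ι) R) (f : ι × ι × ι → R) (x : ι × ι × ι) :
    (leg23 M *ᵥ f) x = (M *ᵥ fun p => f (x.1, p.1, p.2)) (x.2.1, x.2.2) := by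
  simp [leg23, Matrix.mulVec, dotProduct, Fintype.sum_prod_type]

lemma leg12_brauerR (κ u : R) (s e : Matrix (ι × ι) (ι × ι) R) :
    leg12 (brauerR κ u s e) = brauerR κ u (leg12 s) (leg12 e) := by
  refine matrix_ext_of_mulVec fun f x => ?_
  simp [leg12_mulVec, brauerR, Matrix.add_mulVec, Matrix.sub_mulVec, Matrix.smul_mulVec]

lemma leg23_brauerR (κ u : R) (s e : Matrix (ι × ι) (ι × ι) R) :
    leg23 (brauerR κ u s e) = brauerR κ u (leg23 s) (leg23 e) := by
  refine matrix_ext_of_mulVec fun f x => ?_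
  simp [leg23_mulVec, brauerR, Matrix.add_mulVec, Matrix.sub_mulVec, Matrix.smul_mulVec]

lemma leg13_eq_conj (M : Matrix (ι × ι) (ι × ι) R) :
    leg13 M = leg12 (flipMatrix R ι) * leg23 M * leg12 (flipMatrix R ι) := by
  refine matrix_ext_of_mulVec fun f ⟨a, b, c⟩ => ?_
  simp [← Matrix.mulVec_mulVec, leg12_mulVec, leg13_mulVec, leg23_mulVec, flipMatrix_mulVec]

lemma forall_ne_fin_two {p : Fin 2 → Fin 2 → Prop} :
    (∀ ⦃i j⦄, i ≠ j → p i j) ↔ p 0 1 ∧ p 1 0 := by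
  simp [Fin.forall_fin_two]

theorem brauerRelations_legs : BrauerRelations (Fintype.card ι : R)
    ![leg12 (flipMatrix R ι), leg23 (flipMatrix R ι)]
    ![leg12 (traceMatrix R ι), leg23 (traceMatrix R ι)] := by
  constructor
  case' s_mul_s | e_mul_e | s_mul_e | e_mul_s => refine Fin.forall_fin_two.2 ⟨?_, ?_⟩
  case' braid | e_mul_e_mul_e | s_mul_e_mul_e | e_mul_e_mul_s =>
    refine forall_ne_fin_two.2 ⟨?_, ?_⟩
  all_goals
    refine matrix_ext_of_mulVec fun f ⟨a, b, c⟩ => ?_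
    simp [← Matrix.mulVec_mulVec, leg12_mulVec, leg23_mulVec, flipMatrix_mulVec,
      traceMatrix_mulVec, Matrix.smul_mulVec, eq_comm]

theorem so_R_YangBaxter_general {κ : R} (hκ : (Fintype.card ι : R) = 2 * (κ + 1)) (u v : R) :
    leg12 (brauerR κ (u - v) (flipMatrix R ι) (traceMatrix R ι)) *
          leg13 (brauerR κ u (flipMatrix R ι) (traceMatrix R ι)) *
        leg23 (brauerR κ v (flipMatrix R ι) (traceMatrix R ι)) =
      leg23 (brauerR κ v (flipMatrix R ι) (traceMatrix R ι)) *
          leg13 (brauerR κ u (flipMatrix R ι) (traceMatrix R ι)) *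
        leg12 (brauerR κ (u - v) (flipMatrix R ι) (traceMatrix R ι)) := by
  simp only [leg13_eq_conj, leg12_brauerR, leg23_brauerR]
  exact (hκ ▸ brauerRelations_legs (R := R) (ι := ι)).brauerR_yangBaxter zero_ne_one u v

end Matrices

/-- The fundamental `so(n)` R-matrix satisfies the Yang–Baxter equation. -/
theorem so_R_YangBaxter (n : ℕ) (hn : 2 ≤ n) (u v : ℂ) :
    soR12 n (u - v) * soR13 n u * soR23 n v =
      soR23 n v * soR13 n u * soR12 n (u - v) :=
  so_R_YangBaxter_general (by rw [Fintype.card_fin]; ring) u v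
end

section
/- Let γ^1, γ^2, γ^3, γ^4 be a Clifford family of N×N complex matrices in dimension 4, set γ^{ab} := (1/2)(γ^a γ^b − γ^b γ^a) and W := γ^1 γ^2 γ^3 γ^4. Then for all indices a, c ∈ {1,2,3,4} the intertwining identity (1⊗1 − W⊗W) · Σ_{b=1}^4 (γ^{ab} ⊗ γ^{bc}) = ( Σ_{b=1}^4 (γ^{bc} ⊗ γ^{ab}) ) · (1⊗1 − W⊗W) holds; i.e. the chiral projector onto the sector where (1/2)Σ_a γ^a⊗γ^a has eigenvalues ±1 intertwines the two orderings of the product of so(4) spinor L-operator generators. -/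
open Kronecker

/-!
Left or right multiplication by the chirality element `W` turns the bivectors of a Clifford family
into minus their Hodge duals: `W γ^{ab} = γ^{ab} W = -⋆γ^{ab}`. Write `F`, `G` for the matrices of
bivectors of two commuting Clifford families, such as `γ ⊗ 1` and `1 ⊗ γ`. The two claimed products
are then the entries of `F G - ⋆F ⋆G` and `G F - ⋆G ⋆F`. They agree because antisymmetric `4 × 4`
matrices satisfy `⋆F ⋆G + G F = -⟨F, G⟩ 1`, whose right-hand side is symmetric in `F` and `G`.
-/

/-- An alternating (antisymmetric) matrix. The diagonal is required to vanish separately, since in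
characteristic two this does not follow from antisymmetry. -/
structure IsAlternating {ι A : Type*} [Zero A] [Neg A] (F : Matrix ι ι A) : Prop where
  diag : ∀ i, F i i = 0
  swap : ∀ i j, F j i = -F i j

/-- The Hodge dual `⋆F_{ab} = ½ ∑ ε_{abcd} F_{cd}`, with `ε_{0123} = 1`, of an alternating `4 × 4`
matrix. Each sum is written out as a single entry of `F`, so that no division by two is needed. -/
def hodgeDual {A : Type*} [Zero A] (F : Matrix (Fin 4) (Fin 4) A) : Matrix (Fin 4) (Fin 4) A :=
  !![0, F 2 3, F 3 1, F 1 2;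
     F 3 2, 0, F 0 3, F 2 0;
     F 1 3, F 3 0, 0, F 0 1;
     F 2 1, F 0 2, F 1 0, 0]

namespace IsAlternating

variable {A : Type*} [Ring A] {F G : Matrix (Fin 4) (Fin 4) A}

theorem hodgeDual_mul_hodgeDual_add_mul (hF : IsAlternating F) (hG : IsAlternating G)
    (hFG : ∀ i j k l, Commute (F i j) (G k l)) :
    hodgeDual F * hodgeDual G + G * F =
      -(∑ i, ∑ j ∈ Finset.Ioi i, F i j * G i j) • (1 : Matrix (Fin 4) (Fin 4) A) := by
  have hGF (i j k l) : G i j * F k l = F k l * G i j := (hFG k l i j).eq.symm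
  have hpairing : ∑ i, ∑ j ∈ Finset.Ioi i, F i j * G i j =
      F 0 1 * G 0 1 + F 0 2 * G 0 2 + F 0 3 * G 0 3 +
        F 1 2 * G 1 2 + F 1 3 * G 1 3 + F 2 3 * G 2 3 := by
    have hIoi : Finset.Ioi (0 : Fin 4) = {1, 2, 3} ∧ Finset.Ioi (1 : Fin 4) = {2, 3} ∧
        Finset.Ioi (2 : Fin 4) = {3} ∧ Finset.Ioi (3 : Fin 4) = ∅ := by decide
    simp [Fin.sum_univ_four, hIoi, add_assoc]
  rw [hpairing]
  ext a c
  fin_cases a <;> fin_cases c <;>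
    simp only [hodgeDual, Matrix.add_apply, Matrix.smul_apply, Matrix.mul_apply,
      Fin.sum_univ_four, Matrix.of_apply, Matrix.cons_val, Matrix.one_apply, Fin.reduceFinMk,
      Fin.zero_eta, Fin.mk_one, Fin.isValue, Fin.reduceEq, if_true, if_false, smul_eq_mul,
      hGF, hF.diag, hG.diag,
      hF.swap 0 1, hF.swap 0 2, hF.swap 0 3, hF.swap 1 2, hF.swap 1 3, hF.swap 2 3,
      hG.swap 0 1, hG.swap 0 2, hG.swap 0 3, hG.swap 1 2, hG.swap 1 3, hG.swap 2 3] <;>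
    noncomm_ring

theorem mul_sub_hodgeDual_mul_hodgeDual_comm (hF : IsAlternating F) (hG : IsAlternating G)
    (hFG : ∀ i j k l, Commute (F i j) (G k l)) :
    F * G - hodgeDual F * hodgeDual G = G * F - hodgeDual G * hodgeDual F := by
  have hpairing_comm (i j) : F i j * G i j = G i j * F i j := (hFG i j i j).eq
  rw [sub_eq_sub_iff_add_eq_add, add_comm, add_comm (G * F),
    hF.hodgeDual_mul_hodgeDual_add_mul hG hFG,
    hG.hodgeDual_mul_hodgeDual_add_mul hF fun i j k l => (hFG k l i j).symm]
  simp only [hpairing_comm]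

end IsAlternating

/-- A Clifford family for the standard positive definite form: `γ^a γ^b + γ^b γ^a = 2 δ^{ab}`, with
the relations for `a = b` divided by two, which matters in rings where two is a zero divisor. -/
structure IsCliffordFamily_s16 {ι A : Type*} [Ring A] (γ : ι → A) : Prop where
  mul_self : ∀ a, γ a * γ a = 1
  mul_eq_neg_mul : ∀ {a b}, a ≠ b → γ a * γ b = -(γ b * γ a)

/-- The matrix of bivectors `γ^{ab}`, the generators of the spinor representation. The division-free
formula `γ^a γ^b - δ^{ab}` agrees with `½ (γ^a γ^b - γ^b γ^a)` for Clifford families, see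
`IsCliffordFamily.half_smul_commutator`. -/
def bivector {ι A : Type*} [DecidableEq ι] [Ring A] (γ : ι → A) : Matrix ι ι A :=
  Matrix.of (fun a b => γ a * γ b) - 1

/-- The chirality element `W = γ^1 γ^2 γ^3 γ^4`, with indices starting at zero. -/
def chirality {A : Type*} [Mul A] (γ : Fin 4 → A) : A :=
  γ 0 * γ 1 * γ 2 * γ 3

section Bivector

variable {ι A : Type*} [DecidableEq ι] [Ring A]

theorem bivector_apply_of_ne (γ : ι → A) {a b : ι} (hab : a ≠ b) :
    bivector γ a b = γ a * γ b := by
  simp [bivector, hab]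

theorem map_bivector {B F : Type*} [Ring B] [FunLike F A B] [RingHomClass F A B] (f : F)
    (γ : ι → A) (a b : ι) : f (bivector γ a b) = bivector (f ∘ γ) a b := by
  simp [bivector, Matrix.one_apply, apply_ite f]

theorem commute_bivector {x : A} {γ : ι → A} (h : ∀ a, Commute x (γ a)) (a b : ι) :
    Commute x (bivector γ a b) := by
  refine ((h a).mul_right (h b)).sub_right ?_
  rw [Matrix.one_apply]
  split_ifs
  exacts [Commute.one_right x, Commute.zero_right x]

end Bivector

theorem map_chirality {A B F : Type*} [Mul A] [Mul B] [FunLike F A B] [MulHomClass F A B]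
    (f : F) (γ : Fin 4 → A) : f (chirality γ) = chirality (f ∘ γ) := by
  simp only [chirality, map_mul, Function.comp_apply]

theorem commute_chirality {A : Type*} [Semigroup A] {x : A} {γ : Fin 4 → A}
    (h : ∀ a, Commute x (γ a)) : Commute x (chirality γ) :=
  (((h 0).mul_right (h 1)).mul_right (h 2)).mul_right (h 3)

namespace IsCliffordFamily_s16

variable {ι A : Type*} [Ring A] {γ : ι → A}

theorem map {B F : Type*} [Ring B] [FunLike F A B] [RingHomClass F A B]
    (hγ : IsCliffordFamily_s16 γ) (f : F) : IsCliffordFamily_s16 (f ∘ γ) where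
  mul_self a := by simp [← map_mul, hγ.mul_self]
  mul_eq_neg_mul hab := by simp [← map_mul, ← map_neg, hγ.mul_eq_neg_mul hab]

theorem commute_mul (hγ : IsCliffordFamily_s16 γ) {a c d : ι} (hac : a ≠ c) (had : a ≠ d) :
    Commute (γ a) (γ c * γ d) := by
  rw [commute_iff_eq, ← mul_assoc, hγ.mul_eq_neg_mul hac, neg_mul, mul_assoc,
    hγ.mul_eq_neg_mul had, mul_neg, neg_neg, mul_assoc]

theorem mul_commute_mul (hγ : IsCliffordFamily_s16 γ) {a b c d : ι}
    (hac : a ≠ c) (had : a ≠ d) (hbc : b ≠ c) (hbd : b ≠ d) :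
    Commute (γ a * γ b) (γ c * γ d) :=
  (hγ.commute_mul hac had).mul_left (hγ.commute_mul hbc hbd)

theorem product_rotate (hγ : IsCliffordFamily_s16 γ) {a b c d : ι} (hbc : b ≠ c) (hbd : b ≠ d) :
    γ a * γ b * (γ c * γ d) = γ a * γ c * (γ d * γ b) := by
  simp only [mul_assoc, (hγ.commute_mul hbc hbd).eq]

theorem product_mul_first (hγ : IsCliffordFamily_s16 γ) {a b c d : ι}
    (hab : a ≠ b) (hac : a ≠ c) (had : a ≠ d) :
    γ a * γ b * (γ c * γ d) * γ a = -(γ a * (γ a * γ b * (γ c * γ d))) := by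
  rw [mul_assoc, ← (hγ.commute_mul hac had).eq, ← mul_assoc, mul_assoc (γ a) (γ b),
    hγ.mul_eq_neg_mul hab.symm, mul_neg, neg_mul, mul_assoc (γ a) (γ a * γ b)]

theorem mul_mul_mul_self (hγ : IsCliffordFamily_s16 γ) {a b : ι} (hab : a ≠ b) :
    γ a * γ b * (γ a * γ b) = -1 := by
  nth_rw 1 [hγ.mul_eq_neg_mul hab]
  rw [neg_mul, mul_assoc, ← mul_assoc (γ a), hγ.mul_self, one_mul, hγ.mul_self]

section Bivector

variable [DecidableEq ι]

theorem isAlternating_bivector (hγ : IsCliffordFamily_s16 γ) : IsAlternating (bivector γ) where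
  diag a := by simp [bivector, hγ.mul_self]
  swap a b := by
    rcases eq_or_ne a b with rfl | hab
    · simp [bivector, hγ.mul_self]
    · rw [bivector_apply_of_ne γ hab, bivector_apply_of_ne γ hab.symm,
        hγ.mul_eq_neg_mul hab.symm]

theorem product_mul_bivector (hγ : IsCliffordFamily_s16 γ) {a b c d : ι}
    (h : [a, b, c, d].Nodup) :
    γ a * γ b * (γ c * γ d) * bivector γ a b = -bivector γ c d := by
  obtain ⟨⟨hab, hac, had⟩, ⟨hbc, hbd⟩, hcd⟩ :
      (a ≠ b ∧ a ≠ c ∧ a ≠ d) ∧ (b ≠ c ∧ b ≠ d) ∧ c ≠ d := by simpa using h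
  rw [bivector_apply_of_ne γ hab, bivector_apply_of_ne γ hcd, mul_assoc,
    ← (hγ.mul_commute_mul hac had hbc hbd).eq, ← mul_assoc, hγ.mul_mul_mul_self hab, neg_one_mul]

end Bivector

section DivisionByTwo

variable {K : Type*} [DivisionRing K] [NeZero (2 : K)] [Module K A] [DecidableEq ι]

theorem of_anticommutator
    (hγ : ∀ a b, γ a * γ b + γ b * γ a = if a = b then (2 : K) • (1 : A) else 0) :
    IsCliffordFamily_s16 γ where
  mul_self a := by
    have h := hγ a a
    rw [if_pos rfl, ← two_smul K] at h
    exact (smul_right_inj (two_ne_zero (α := K))).mp h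
  mul_eq_neg_mul {a b} hab := eq_neg_of_add_eq_zero_left (by rw [hγ, if_neg hab])

theorem half_smul_commutator (hγ : IsCliffordFamily_s16 γ) (a b : ι) :
    (1 / 2 : K) • (γ a * γ b - γ b * γ a) = bivector γ a b := by
  rcases eq_or_ne a b with rfl | hab
  · rw [sub_self, smul_zero, hγ.isAlternating_bivector.diag]
  · rw [bivector_apply_of_ne γ hab, hγ.mul_eq_neg_mul hab.symm, sub_neg_eq_add, ← two_smul K,
      smul_smul, one_div_mul_cancel two_ne_zero, one_smul]

end DivisionByTwo

section Chirality

variable {γ : Fin 4 → A}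

theorem chirality_eq_even_products (hγ : IsCliffordFamily_s16 γ) :
    chirality γ = γ 0 * γ 1 * (γ 2 * γ 3) ∧ chirality γ = γ 0 * γ 2 * (γ 3 * γ 1) ∧
    chirality γ = γ 0 * γ 3 * (γ 1 * γ 2) ∧ chirality γ = γ 2 * γ 3 * (γ 0 * γ 1) ∧
    chirality γ = γ 3 * γ 1 * (γ 0 * γ 2) ∧ chirality γ = γ 1 * γ 2 * (γ 0 * γ 3) := by
  have h01 : chirality γ = γ 0 * γ 1 * (γ 2 * γ 3) := mul_assoc _ _ _
  have h02 := h01.trans (hγ.product_rotate (by decide) (by decide))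
  have h03 := h02.trans (hγ.product_rotate (by decide) (by decide))
  have swap {a b c d : Fin 4} (h : chirality γ = γ a * γ b * (γ c * γ d))
      (hac : a ≠ c) (had : a ≠ d) (hbc : b ≠ c) (hbd : b ≠ d) :
      chirality γ = γ c * γ d * (γ a * γ b) :=
    h.trans (hγ.mul_commute_mul hac had hbc hbd)
  refine ⟨h01, h02, h03, swap h01 ?_ ?_ ?_ ?_, swap h02 ?_ ?_ ?_ ?_, swap h03 ?_ ?_ ?_ ?_⟩ <;>
    decide

theorem chirality_mul_bivector (hγ : IsCliffordFamily_s16 γ) (a b : Fin 4) :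
    chirality γ * bivector γ a b = -hodgeDual (bivector γ) a b := by
  obtain ⟨h01, h02, h03, h23, h31, h12⟩ := hγ.chirality_eq_even_products
  have dual {a b c d : Fin 4} (hW : chirality γ = γ a * γ b * (γ c * γ d))
      (h : [a, b, c, d].Nodup) : chirality γ * bivector γ a b = -bivector γ c d :=
    hW ▸ hγ.product_mul_bivector h
  have d01 := dual h01 (by decide)
  have d02 := dual h02 (by decide)
  have d03 := dual h03 (by decide)
  have d23 := dual h23 (by decide)
  have d31 := dual h31 (by decide)
  have d12 := dual h12 (by decide)
  have hΓ := hγ.isAlternating_bivector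
  fin_cases a <;> fin_cases b <;>
    simp [hodgeDual, hΓ.diag, d01, d02, d03, d23, d31, d12,
      hΓ.swap 0 1, hΓ.swap 0 2, hΓ.swap 0 3,
      hΓ.swap 2 3, hΓ.swap 3 1, hΓ.swap 1 2]

theorem chirality_mul (hγ : IsCliffordFamily_s16 γ) (a : Fin 4) :
    chirality γ * γ a = -(γ a * chirality γ) := by
  obtain ⟨h01, -, -, h23, h31, h12⟩ := hγ.chirality_eq_even_products
  fin_cases a
  · exact h01 ▸ hγ.product_mul_first (by decide) (by decide) (by decide)
  · exact h12 ▸ hγ.product_mul_first (by decide) (by decide) (by decide)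
  · exact h23 ▸ hγ.product_mul_first (by decide) (by decide) (by decide)
  · exact h31 ▸ hγ.product_mul_first (by decide) (by decide) (by decide)

theorem commute_chirality_bivector (hγ : IsCliffordFamily_s16 γ) (a b : Fin 4) :
    Commute (chirality γ) (bivector γ a b) := by
  rcases eq_or_ne a b with rfl | hab
  · exact hγ.isAlternating_bivector.diag a ▸ Commute.zero_right _
  · rw [bivector_apply_of_ne γ hab, commute_iff_eq, ← mul_assoc, hγ.chirality_mul, neg_mul,
      mul_assoc, hγ.chirality_mul, mul_neg, neg_neg, mul_assoc]

end Chirality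

end IsCliffordFamily_s16

theorem so4_chiral_projector_intertwines_general {A : Type*} [Ring A] {γ η : Fin 4 → A}
    (hγ : IsCliffordFamily_s16 γ) (hη : IsCliffordFamily_s16 η) (hγη : ∀ a b, Commute (γ a) (η b))
    (a c : Fin 4) :
    (1 - chirality γ * chirality η) * ∑ b, bivector γ a b * bivector η b c =
      (∑ b, bivector γ b c * bivector η a b) * (1 - chirality γ * chirality η) := by
  have h_gen_biv (i j k) : Commute (η k) (bivector γ i j) :=
    commute_bivector (fun l => (hγη l k).symm) i j
  have h_biv_biv (i j k l) : Commute (bivector γ i j) (bivector η k l) :=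
    commute_bivector (fun p => (h_gen_biv i j p).symm) k l
  have h_biv_chir (i j) : Commute (bivector γ i j) (chirality η) :=
    commute_chirality fun k => (h_gen_biv i j k).symm
  have h_chir_chir : Commute (chirality γ) (chirality η) :=
    commute_chirality fun k => (commute_chirality fun l => (hγη l k).symm).symm
  have left_dual (i j k l) : chirality γ * chirality η * (bivector γ i j * bivector η k l) =
      hodgeDual (bivector γ) i j * hodgeDual (bivector η) k l := by
    rw [(h_biv_chir i j).symm.mul_mul_mul_comm, hγ.chirality_mul_bivector,
      hη.chirality_mul_bivector, neg_mul_neg]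
  have right_dual (i j k l) : bivector η k l * bivector γ i j * (chirality γ * chirality η) =
      hodgeDual (bivector η) k l * hodgeDual (bivector γ) i j := by
    rw [h_chir_chir.eq, (h_biv_chir i j).mul_mul_mul_comm,
      ← (hη.commute_chirality_bivector k l).eq, ← (hγ.commute_chirality_bivector i j).eq,
      hγ.chirality_mul_bivector, hη.chirality_mul_bivector, neg_mul_neg]
  calc (1 - chirality γ * chirality η) * ∑ b, bivector γ a b * bivector η b c
    _ = (bivector γ * bivector η - hodgeDual (bivector γ) * hodgeDual (bivector η)) a c := by
      rw [sub_mul, one_mul, Finset.mul_sum]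
      simp only [left_dual, Matrix.sub_apply, Matrix.mul_apply]
    _ = (bivector η * bivector γ - hodgeDual (bivector η) * hodgeDual (bivector γ)) a c := by
      rw [hγ.isAlternating_bivector.mul_sub_hodgeDual_mul_hodgeDual_comm
        hη.isAlternating_bivector h_biv_biv]
    _ = (∑ b, bivector γ b c * bivector η a b) * (1 - chirality γ * chirality η) := by
      rw [mul_sub, mul_one, Finset.sum_mul]
      simp only [(h_biv_biv _ _ _ _).eq, right_dual, Matrix.sub_apply, Matrix.mul_apply]

theorem chiral_projector_kronecker_intertwines {R m n : Type*} [CommRing R] [Fintype m] [Fintype n]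
    [DecidableEq m] [DecidableEq n] {γ : Fin 4 → Matrix m m R} {η : Fin 4 → Matrix n n R}
    (hγ : IsCliffordFamily_s16 γ) (hη : IsCliffordFamily_s16 η) (a c : Fin 4) :
    ((1 : Matrix m m R) ⊗ₖ (1 : Matrix n n R) - chirality γ ⊗ₖ chirality η) *
        ∑ b, bivector γ a b ⊗ₖ bivector η b c =
      (∑ b, bivector γ b c ⊗ₖ bivector η a b) *
        ((1 : Matrix m m R) ⊗ₖ (1 : Matrix n n R) - chirality γ ⊗ₖ chirality η) := by
  let e := (Matrix.kroneckerAlgEquiv m n R).toAlgHom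
  let f : Matrix m m R →ₐ[R] Matrix (m × n) (m × n) R := e.comp Algebra.TensorProduct.includeLeft
  let g : Matrix n n R →ₐ[R] Matrix (m × n) (m × n) R := e.comp Algebra.TensorProduct.includeRight
  have mul_eq_kronecker (X Y) : f X * g Y = X ⊗ₖ Y := by
    simp [f, g, e, ← Matrix.mul_kronecker_mul]
  have commute_fg (X Y) : Commute (f X) (g Y) := by
    simp [f, g, e, commute_iff_eq, ← Matrix.mul_kronecker_mul]
  simpa only [← map_bivector, ← map_chirality, mul_eq_kronecker, Matrix.one_kronecker_one] using
    so4_chiral_projector_intertwines_general (hγ.map f) (hη.map g) (fun _ _ => commute_fg _ _) a c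

/-- The chiral projector `(1/2)(1⊗1 − W⊗W)`, `W = γ^1γ^2γ^3γ^4`, intertwines the two
orderings of the product of `so(4)` spinor L-operator generators
`γ^{ab} = (1/2)(γ^aγ^b − γ^bγ^a)`:
`(1⊗1 − W⊗W)·Σ_b γ^{ab} ⊗ γ^{bc} = (Σ_b γ^{bc} ⊗ γ^{ab})·(1⊗1 − W⊗W)`. -/
theorem so4_chiral_projector_intertwines {N : ℕ}
    (γ : Fin 4 → Matrix (Fin N) (Fin N) ℂ)
    (hγ : ∀ a b, γ a * γ b + γ b * γ a =
      if a = b then (2 : ℂ) • (1 : Matrix (Fin N) (Fin N) ℂ) else 0)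
    (γ2 : Fin 4 → Fin 4 → Matrix (Fin N) (Fin N) ℂ)
    (hγ2 : ∀ a b, γ2 a b = (1/2 : ℂ) • (γ a * γ b - γ b * γ a))
    (W : Matrix (Fin N) (Fin N) ℂ)
    (hW : W = γ 0 * γ 1 * γ 2 * γ 3) :
    ∀ a c : Fin 4,
      ((1 : Matrix (Fin N) (Fin N) ℂ) ⊗ₖ (1 : Matrix (Fin N) (Fin N) ℂ) - W ⊗ₖ W) *
          (∑ b, γ2 a b ⊗ₖ γ2 b c) =
        (∑ b, γ2 b c ⊗ₖ γ2 a b) *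
          ((1 : Matrix (Fin N) (Fin N) ℂ) ⊗ₖ (1 : Matrix (Fin N) (Fin N) ℂ) - W ⊗ₖ W) := by
  have hγ_fam := IsCliffordFamily_s16.of_anticommutator hγ
  obtain rfl : γ2 = bivector γ :=
    funext₂ fun a b => (hγ2 a b).trans (hγ_fam.half_smul_commutator a b)
  obtain rfl : W = chirality γ := hW
  exact chiral_projector_kronecker_intertwines hγ_fam hγ_fam
end
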